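/- arXiv:2412.12787 — 2 statements merged into one kernel-verified Lean document; each statement's English description precedes it below -/
import Mathlib

section
/- Let b ≥ 3, r ≥ 1, and m be integers with 3−b ≤ m ≤ 1, and set n = br + m; assume n ≥ b+1. Then σ_{2,max}(b,n) = 1/r. -/
open scoped BigOperators
open Classical

/-- The Dirichlet energy of a function on a finite graph: `∑_{edges xy} (f x - f y)^2`. -/
noncomputable def dirichletEnergy {V : Type*} [Fintype V] (G : SimpleGraph V) (f : V → ℝ) : ℝ :=
  (∑ x : V, ∑ y : V, if G.Adj x y then (f x - f y) ^ 2 else 0) / 2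

/-- The `k`-th Steklov (Dirichlet-to-Neumann) eigenvalue (1-indexed, in increasing order
with multiplicity) of a finite graph `G` with boundary `B`, via the variational
(Courant–Fischer) characterization. -/
noncomputable def steklovEig {V : Type*} [Fintype V] (G : SimpleGraph V) (B : Finset V)
    (k : ℕ) : ℝ :=
  sInf { t : ℝ | ∃ F : Submodule ℝ (V → ℝ),
    Module.finrank ℝ (F.map (LinearMap.funLeft ℝ ℝ (fun x : {v // v ∈ B} => (x : V)))) = k ∧
    ∀ f ∈ F, dirichletEnergy G f ≤ t * ∑ x ∈ B, (f x) ^ 2 }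

/-- The set of leaves (vertices of degree 1) of a finite graph, as a `Finset`. -/
noncomputable def leavesFinset {V : Type*} [Fintype V] (G : SimpleGraph V) : Finset V :=
  Finset.univ.filter fun v => G.degree v = 1

/-- `σ_{k,max}(b,n)`: the maximum of the `k`-th Steklov eigenvalue over all trees with
`b` leaves (as boundary) and `n` vertices. -/
noncomputable def sigmaMax (k b n : ℕ) : ℝ :=
  sSup { s : ℝ | ∃ G : SimpleGraph (Fin n), G.IsTree ∧ (leavesFinset G).card = b ∧
    s = steklovEig G (leavesFinset G) k }

/-- `σ̃_{2,max}(D,n)`: the maximum of the first nontrivial Steklov eigenvalue over all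
trees with diameter `D` and `n` vertices. -/
noncomputable def sigmaTildeMax (D n : ℕ) : ℝ :=
  sSup { s : ℝ | ∃ G : SimpleGraph (Fin n), G.IsTree ∧ G.diam = D ∧
    s = steklovEig G (leavesFinset G) 2 }

/-!
In a finite tree the Laplacian of the distance to a vertex `c` is `2 - deg - 2 δ_c`. Everything
follows from this identity and Green's formula.

* Testing with constants and `dist x - dist y`, whose Laplacian is `2 δ_y - 2 δ_x`, gives
  `σ₂ ≤ 2 / dist x y` for all boundary vertices `x ≠ y`.
* Pairing `2 - deg` with `1` and with `dist c` gives `2` and `n - 1`. If all leaves are at mutual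
  distance at most `2k + 1`, average the second identity over the two ends of a central edge: only
  leaves contribute positively, each at most `k` after subtracting `1 / 2`, whence `n ≤ bk + 2`.
  So if `n > b(r - 1) + 2`, two leaves are at distance at least `2r`, and `σ₂ ≤ 1 / r`.
* On a spider with centre `c` and legs of length at most `r`, the function `dist c` vanishes at
  `c`, and away from `c` its Laplacian is `1` at the leaves and `0` at the other vertices. Picone's
  inequality for it gives `∑ (f - f c)² / dist c ≤ E(f)`, the sum being over the leaves, hence
  `σ₂ ≥ 1 / r`.
-/

section TreeDist

variable {V : Type*} {G : SimpleGraph V}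

theorem exists_adj_dist_eq_add_one (hG : G.Connected) {c v : V} (hvc : v ≠ c) :
    ∃ w, G.Adj v w ∧ G.dist c v = G.dist c w + 1 := by
  obtain ⟨p, hp⟩ := hG.exists_walk_length_eq_dist v c
  cases p with
  | nil => exact absurd rfl hvc
  | @cons _ w _ hvw q =>
    refine ⟨w, hvw, ?_⟩
    have hq := SimpleGraph.dist_le q
    have htri := hG.dist_triangle (u := c) (v := w) (w := v)
    rw [SimpleGraph.dist_eq_one_iff_adj.2 hvw.symm] at htri
    rw [SimpleGraph.Walk.length_cons, SimpleGraph.dist_comm] at hp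
    rw [SimpleGraph.dist_comm] at hq
    omega

theorem eq_of_adj_of_dist_eq_add_one (hG : G.IsTree) {c v w w' : V} (hw : G.Adj v w)
    (hw' : G.Adj v w') (hd : G.dist c v = G.dist c w + 1) (hd' : G.dist c v = G.dist c w' + 1) :
    w = w' := by
  have isPath_cons {u : V} (hu : G.Adj v u) (hdu : G.dist c v = G.dist c u + 1)
      (p : G.Walk u c) (hp : p.length = G.dist u c) : (p.cons hu).IsPath := by
    apply SimpleGraph.Walk.isPath_of_length_eq_dist
    rw [SimpleGraph.Walk.length_cons, hp, SimpleGraph.dist_comm, ← hdu, SimpleGraph.dist_comm]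
  obtain ⟨p, hp⟩ := hG.connected.exists_walk_length_eq_dist w c
  obtain ⟨p', hp'⟩ := hG.connected.exists_walk_length_eq_dist w' c
  have hpp' := (hG.existsUnique_path v c).unique (isPath_cons hw hd p hp)
    (isPath_cons hw' hd' p' hp')
  simpa using congrArg SimpleGraph.Walk.snd hpp'

theorem dist_eq_dist_add_dist_of_adj (hG : G.IsTree) {x z c w : V} (hcw : G.Adj c w)
    (hx : G.dist x w = G.dist x c + 1) (hz : G.dist z c = G.dist z w + 1) :
    G.dist x z = G.dist x c + G.dist z c := by
  induction hn : G.dist z w generalizing c w with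
  | zero =>
    obtain rfl : z = w := hG.connected.dist_eq_zero_iff.1 hn
    omega
  | succ n ih =>
    have hwz : w ≠ z := by
      rintro rfl
      simp at hn
    obtain ⟨u, hwu, hzu⟩ := exists_adj_dist_eq_add_one hG.connected hwz
    have hxu : G.dist x u = G.dist x w + 1 := by
      refine (hG.dist_eq_dist_add_one_of_adj x hwu).resolve_left fun h => ?_
      obtain rfl := eq_of_adj_of_dist_eq_add_one hG hwu hcw.symm h hx
      omega
    have := ih hwu hxu hzu (by omega)
    omega

theorem exists_adj_forall_dist_add_dist_le (hG : G.IsTree) {S : Finset V} (hS : S.Nontrivial)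
    {k : ℕ} (hk : ∀ x ∈ S, ∀ y ∈ S, G.dist x y ≤ 2 * k + 1) :
    ∃ c c', G.Adj c c' ∧ ∀ z ∈ S, G.dist z c + G.dist z c' ≤ 2 * k + 1 := by
  have : Nonempty V := hS.nonempty.to_type
  let radius (c : V) : ℕ := S.sup (G.dist · c)
  have le_radius {z : V} (c : V) (hz : z ∈ S) : G.dist z c ≤ radius c :=
    Finset.le_sup (f := (G.dist · c)) hz
  have radius_attained (c : V) : ∃ z ∈ S, radius c = G.dist z c :=
    S.exists_mem_eq_sup hS.nonempty _
  obtain ⟨c, hc⟩ : ∃ c, ∀ c', radius c ≤ radius c' :=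
    ⟨Function.argmin radius, fun c' => Function.argmin_le radius c'⟩
  obtain ⟨l, hl, hlc⟩ := radius_attained c
  have hcl : c ≠ l := by
    rintro rfl
    obtain ⟨x, hx, hxc⟩ := hS.exists_ne c
    have := le_radius c hx
    exact hxc (hG.connected.dist_eq_zero_iff.1 (by simp_all))
  obtain ⟨c', hcc', hlc'⟩ := exists_adj_dist_eq_add_one hG.connected hcl
  have away {z : V} (hz : G.dist z c' = G.dist z c + 1) : G.dist z l = G.dist z c + radius c := by
    rw [dist_eq_dist_add_dist_of_adj hG hcc' hz hlc', hlc]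
  have hradius : radius c ≤ k + 1 := by
    obtain ⟨l', hl', hl'c'⟩ := radius_attained c'
    have hcc'_radius := hc c'
    have hl'c := le_radius c hl'
    rcases hG.dist_eq_dist_add_one_of_adj l' hcc' with h | h
    · omega
    · have := away h
      have := hk l' hl' l hl
      omega
  refine ⟨c, c', hcc', fun z hz => ?_⟩
  have hzc := le_radius c hz
  rcases hG.dist_eq_dist_add_one_of_adj z hcc' with h | h
  · omega
  · have := away h
    have := hk z hz l hl
    omega

theorem isTree_of_forall_adj_parent [Finite V] (hG : G.Connected) {c : V} (parent : V → V)
    (hc : parent c = c) (hp : ∀ u v, G.Adj u v → v = parent u ∨ u = parent v) : G.IsTree := by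
  have := Fintype.ofFinite V
  have hsub : G.edgeFinset ⊆ (Finset.univ.erase c).image fun u => s(u, parent u) := by
    have mem_image {u : V} (h : G.Adj u (parent u)) :
        s(u, parent u) ∈ (Finset.univ.erase c).image fun u => s(u, parent u) := by
      refine Finset.mem_image_of_mem _ (Finset.mem_erase.2 ⟨?_, Finset.mem_univ u⟩)
      rintro rfl
      exact h.ne hc.symm
    intro e
    induction e using Sym2.ind with
    | _ u v =>
      intro he
      have huv : G.Adj u v := by simpa using he
      rcases hp u v huv with rfl | rfl
      · exact mem_image huv
      · exact Sym2.eq_swap ▸ mem_image huv.symm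
  have hle : G.edgeFinset.card ≤ Fintype.card V - 1 :=
    ((Finset.card_le_card hsub).trans Finset.card_image_le).trans_eq (by simp)
  have hge := hG.card_vert_le_card_edgeSet_add_one
  have hpos : 0 < Fintype.card V := Fintype.card_pos_iff.2 ⟨c⟩
  rw [SimpleGraph.isTree_iff_connected_and_card]
  rw [Nat.card_eq_fintype_card, Nat.card_eq_fintype_card, ← SimpleGraph.edgeFinset_card] at *
  exact ⟨hG, by omega⟩

end TreeDist

section Laplacian

open Matrix

variable {V : Type*} [Fintype V] {G : SimpleGraph V}

theorem sum_mul_lapMatrix_mulVec (h f : V → ℝ) :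
    ∑ v, h v * (G.lapMatrix ℝ *ᵥ f) v =
      (∑ v, ∑ w, if G.Adj v w then (h v - h w) * (f v - f w) else 0) / 2 := by
  have hsum : ∑ v, h v * (G.lapMatrix ℝ *ᵥ f) v =
      ∑ v, ∑ w, if G.Adj v w then h v * (f v - f w) else 0 := by
    refine Finset.sum_congr rfl fun v _ => ?_
    rw [SimpleGraph.lapMatrix_mulVec_apply, ← Finset.sum_filter,
      ← SimpleGraph.neighborFinset_eq_filter, ← Finset.mul_sum, Finset.sum_sub_distrib,
      Finset.sum_const, nsmul_eq_mul, SimpleGraph.card_neighborFinset_eq_degree]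
  have hswap : ∑ v, ∑ w, (if G.Adj v w then h v * (f v - f w) else 0) =
      ∑ v, ∑ w, if G.Adj v w then h w * (f w - f v) else 0 := by
    rw [Finset.sum_comm]
    simp only [G.adj_comm]
  rw [eq_div_iff two_ne_zero, mul_two]
  nth_rw 2 [hsum]
  rw [hsum, hswap]
  nth_rw 1 [← hswap]
  simp only [← Finset.sum_add_distrib]
  refine Finset.sum_congr rfl fun v _ => Finset.sum_congr rfl fun w _ => ?_
  split_ifs <;> ring

theorem dirichletEnergy_eq_sum_mul_lapMatrix_mulVec (f : V → ℝ) :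
    dirichletEnergy G f = ∑ v, f v * (G.lapMatrix ℝ *ᵥ f) v := by
  simp only [dirichletEnergy, sum_mul_lapMatrix_mulVec, pow_two]

theorem dirichletEnergy_nonneg (f : V → ℝ) : 0 ≤ dirichletEnergy G f := by
  unfold dirichletEnergy
  positivity

theorem dirichletEnergy_const_add_mul (α β : ℝ) (f : V → ℝ) :
    dirichletEnergy G (fun v => α + β * f v) = β ^ 2 * dirichletEnergy G f := by
  simp only [dirichletEnergy, add_sub_add_left_eq_sub, ← mul_sub, mul_pow, ← mul_ite_zero,
    ← Finset.mul_sum, mul_div_assoc]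

theorem sq_div_sub_sq_div_mul_sub_le_sq_sub {s t x y : ℝ} (hs : 0 ≤ s) (ht : 0 ≤ t)
    (hx : s = 0 → x = 0) (hy : t = 0 → y = 0) :
    (x ^ 2 / s - y ^ 2 / t) * (s - t) ≤ (x - y) ^ 2 := by
  rcases hs.eq_or_lt with rfl | hs
  · rcases ht.eq_or_lt with rfl | ht
    · simp [hx rfl, hy rfl]
    · simp [hx rfl, ht.ne']
  · rcases ht.eq_or_lt with rfl | ht
    · simp [hy rfl, hs.ne']
    · have key : (x - y) ^ 2 - (x ^ 2 / s - y ^ 2 / t) * (s - t) =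
          (x * t - y * s) ^ 2 / (s * t) := by
        field_simp
        ring
      have : 0 ≤ (x * t - y * s) ^ 2 / (s * t) := by positivity
      linarith

theorem sum_sq_div_mul_lapMatrix_mulVec_le_dirichletEnergy {φ g : V → ℝ} (hφ : ∀ v, 0 ≤ φ v)
    (hg : ∀ v, φ v = 0 → g v = 0) :
    ∑ v, g v ^ 2 / φ v * (G.lapMatrix ℝ *ᵥ φ) v ≤ dirichletEnergy G g := by
  rw [sum_mul_lapMatrix_mulVec (fun v => g v ^ 2 / φ v), dirichletEnergy]
  gcongr with v _ w _
  split_ifs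
  · exact sq_div_sub_sq_div_mul_sub_le_sq_sub (hφ v) (hφ w) (hg v) (hg w)
  · exact le_rfl

theorem lapMatrix_mulVec_dist (hG : G.IsTree) (c v : V) :
    (G.lapMatrix ℝ *ᵥ fun w => (G.dist c w : ℝ)) v =
      2 - G.degree v - if v = c then 2 else 0 := by
  rw [SimpleGraph.lapMatrix_mulVec_apply]
  split_ifs with hvc
  · subst hvc
    have hdist : ∀ w ∈ G.neighborFinset v, (G.dist v w : ℝ) = 1 := by
      intro w hw
      rw [SimpleGraph.dist_eq_one_iff_adj.2 ((G.mem_neighborFinset v w).1 hw), Nat.cast_one]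
    rw [Finset.sum_congr rfl hdist]
    simp
  · obtain ⟨p, hvp, hp⟩ := exists_adj_dist_eq_add_one hG.connected hvc
    have hdist : ∀ w ∈ G.neighborFinset v,
        (G.dist c w : ℝ) = G.dist c v + 1 - if w = p then 2 else 0 := by
      intro w hw
      rw [SimpleGraph.mem_neighborFinset] at hw
      split_ifs with hwp
      · rw [hwp, hp]
        push_cast
        ring
      · have h := (hG.dist_eq_dist_add_one_of_adj c hw).resolve_left
          fun h => hwp (eq_of_adj_of_dist_eq_add_one hG hw hvp h hp)
        rw [h]
        push_cast
        ring
    have hmem : p ∈ G.neighborFinset v := (G.mem_neighborFinset v p).2 hvp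
    rw [Finset.sum_congr rfl hdist, Finset.sum_sub_distrib, Finset.sum_const, nsmul_eq_mul,
      SimpleGraph.card_neighborFinset_eq_degree, Finset.sum_ite_eq', if_pos hmem]
    ring

theorem sum_mul_lapMatrix_mulVec_dist (hG : G.IsTree) (h : V → ℝ) (c : V) :
    ∑ v, h v * (G.lapMatrix ℝ *ᵥ fun w => (G.dist c w : ℝ)) v =
      ∑ v, (2 - (G.degree v : ℝ)) * h v - 2 * h c := by
  have hδ : ∑ v, h v * (if v = c then (2 : ℝ) else 0) = 2 * h c := by
    simp [mul_comm]
  rw [← hδ, ← Finset.sum_sub_distrib]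
  refine Finset.sum_congr rfl fun v _ => ?_
  rw [lapMatrix_mulVec_dist hG]
  ring

theorem dirichletEnergy_dist_sub_dist (hG : G.IsTree) (x y : V) :
    dirichletEnergy G (fun v => (G.dist x v : ℝ) - G.dist y v) = 4 * G.dist x y := by
  have hsub : (fun v => (G.dist x v : ℝ) - G.dist y v) =
    (fun v => (G.dist x v : ℝ)) - fun v => (G.dist y v : ℝ) := rfl
  rw [dirichletEnergy_eq_sum_mul_lapMatrix_mulVec]
  conv_lhs => enter [2, v, 2]; rw [hsub, mulVec_sub, Pi.sub_apply]
  simp only [mul_sub (_ - _), Finset.sum_sub_distrib]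
  rw [sum_mul_lapMatrix_mulVec_dist hG, sum_mul_lapMatrix_mulVec_dist hG, SimpleGraph.dist_self,
    SimpleGraph.dist_self, SimpleGraph.dist_comm (u := y)]
  push_cast
  ring

theorem sum_two_sub_degree (hG : G.IsTree) : ∑ v, (2 - (G.degree v : ℝ)) = 2 := by
  obtain ⟨c⟩ := hG.connected.nonempty
  have hgreen := sum_mul_lapMatrix_mulVec_dist hG (fun _ => 1) c
  rw [sum_mul_lapMatrix_mulVec] at hgreen
  simp only [sub_self, zero_mul, ite_self, Finset.sum_const_zero, zero_div, mul_one] at hgreen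
  linarith

theorem sum_two_sub_degree_mul_dist (hG : G.IsTree) (c : V) :
    ∑ v, (2 - (G.degree v : ℝ)) * G.dist c v = Fintype.card V - 1 := by
  have henergy : dirichletEnergy G (fun v => (G.dist c v : ℝ)) = (∑ v, (G.degree v : ℝ)) / 2 := by
    simp only [dirichletEnergy, SimpleGraph.degree_eq_sum_if_adj]
    congr! 5 with v _ w _ hvw
    rcases hG.dist_eq_dist_add_one_of_adj c hvw with h | h <;> rw [h] <;> push_cast <;> ring
  have hdeg := sum_two_sub_degree hG
  rw [dirichletEnergy_eq_sum_mul_lapMatrix_mulVec, sum_mul_lapMatrix_mulVec_dist hG,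
    SimpleGraph.dist_self] at henergy
  rw [Finset.sum_sub_distrib, Finset.sum_const, Finset.card_univ, nsmul_eq_mul] at hdeg
  push_cast at henergy
  linarith

end Laplacian

section Leaves

variable {V : Type*} [Fintype V] {G : SimpleGraph V}

theorem mem_leavesFinset {v : V} : v ∈ leavesFinset G ↔ G.degree v = 1 := by
  simp [leavesFinset]

theorem card_le_of_leaves_dist_add_dist_le (hG : G.IsTree) {c c' : V} (hcc' : G.Adj c c') {k : ℕ}
    (hk : ∀ z ∈ leavesFinset G, G.dist z c + G.dist z c' ≤ 2 * k + 1) :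
    Fintype.card V ≤ (leavesFinset G).card * k + 2 := by
  have : Nontrivial V := ⟨c, c', hcc'.ne⟩
  let g (v : V) : ℝ := ((G.dist c v : ℝ) + G.dist c' v - 1) / 2
  have hg_nonneg (v : V) : 0 ≤ g v := by
    have htri := hG.connected.dist_triangle (u := c) (v := v) (w := c')
    rw [SimpleGraph.dist_eq_one_iff_adj.2 hcc', SimpleGraph.dist_comm (u := v)] at htri
    have : (1 : ℝ) ≤ G.dist c v + G.dist c' v := by exact_mod_cast htri
    simp only [g]
    linarith
  have hg_leaf (v : V) (hv : v ∈ leavesFinset G) : g v ≤ k := by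
    have := hk v hv
    rw [SimpleGraph.dist_comm, SimpleGraph.dist_comm (v := c')] at this
    have : (G.dist c v + G.dist c' v : ℝ) ≤ 2 * k + 1 := by exact_mod_cast this
    simp only [g]
    linarith
  have hterm (v : V) :
      (2 - (G.degree v : ℝ)) * g v ≤ if v ∈ leavesFinset G then (k : ℝ) else 0 := by
    split_ifs with hv
    · rw [mem_leavesFinset.1 hv]
      norm_num [hg_leaf v hv]
    · rw [mem_leavesFinset] at hv
      have hpos := hG.connected.preconnected.degree_pos_of_nontrivial v
      have : (2 : ℝ) ≤ G.degree v := by exact_mod_cast (show 2 ≤ G.degree v by omega)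
      exact mul_nonpos_of_nonpos_of_nonneg (by linarith) (hg_nonneg v)
  have hsum : ∑ v, (2 - (G.degree v : ℝ)) * g v = Fintype.card V - 2 := by
    have hc := sum_two_sub_degree_mul_dist hG c
    have hc' := sum_two_sub_degree_mul_dist hG c'
    have h1 := sum_two_sub_degree hG
    simp only [g, ← mul_div_assoc, mul_sub, mul_add, mul_one, ← Finset.sum_div,
      Finset.sum_sub_distrib, Finset.sum_add_distrib] at hc hc' h1 ⊢
    linarith
  have hle := Finset.sum_le_sum fun v (_ : v ∈ Finset.univ) => hterm v
  rw [hsum, Finset.sum_ite_mem, Finset.univ_inter, Finset.sum_const, nsmul_eq_mul] at hle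
  exact_mod_cast (by linarith : (Fintype.card V : ℝ) ≤ (leavesFinset G).card * k + 2)

theorem exists_leaves_lt_dist (hG : G.IsTree) (hL : (leavesFinset G).Nontrivial) {k : ℕ}
    (hk : (leavesFinset G).card * k + 2 < Fintype.card V) :
    ∃ x ∈ leavesFinset G, ∃ y ∈ leavesFinset G, 2 * k + 1 < G.dist x y := by
  by_contra! hdist
  obtain ⟨c, c', hcc', hc⟩ := exists_adj_forall_dist_add_dist_le hG hL hdist
  exact hk.not_ge (card_le_of_leaves_dist_add_dist_le hG hcc' hc)

theorem two_sub_degree_eq_ite_mem_leavesFinset [Nontrivial V] (hG : G.Preconnected) {v : V}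
    (hdeg : G.degree v ≤ 2) : 2 - (G.degree v : ℝ) = if v ∈ leavesFinset G then 1 else 0 := by
  have hpos := hG.degree_pos_of_nontrivial v
  simp only [mem_leavesFinset]
  interval_cases G.degree v <;> norm_num

theorem card_leavesFinset_eq_degree_of_forall_degree_le_two (hG : G.IsTree) {c : V}
    (hdeg : ∀ v ≠ c, G.degree v ≤ 2) (hc : G.degree c ≠ 1) :
    (leavesFinset G).card = G.degree c := by
  have hterm (v : V) : 2 - (G.degree v : ℝ) =
      (if v ∈ leavesFinset G then 1 else 0) + if v = c then 2 - (G.degree c : ℝ) else 0 := by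
    rcases eq_or_ne v c with rfl | hvc
    · simp [mem_leavesFinset, hc]
    · have : Nontrivial V := ⟨v, c, hvc⟩
      simp [hvc, two_sub_degree_eq_ite_mem_leavesFinset hG.connected.preconnected (hdeg v hvc)]
  have hsum := sum_two_sub_degree hG
  rw [Finset.sum_congr rfl fun v _ => hterm v, Finset.sum_add_distrib, Finset.sum_boole,
    Finset.filter_univ_mem, Finset.sum_ite_eq', if_pos (Finset.mem_univ c)] at hsum
  exact_mod_cast (by linarith : ((leavesFinset G).card : ℝ) = G.degree c)

theorem sum_leaves_sq_sub_le_mul_dirichletEnergy (hG : G.IsTree) {c : V}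
    (hdeg : ∀ v ≠ c, G.degree v ≤ 2) {r : ℕ} (hr : ∀ v ∈ leavesFinset G, G.dist c v ≤ r)
    (f : V → ℝ) :
    ∑ v ∈ leavesFinset G, (f v - f c) ^ 2 ≤ r * dirichletEnergy G f := by
  let g (v : V) : ℝ := -f c + 1 * f v
  have hg (v : V) : g v = f v - f c := by simp only [g]; ring
  have hgc : g c = 0 := by simp [hg]
  have hpicone : ∑ v ∈ leavesFinset G, g v ^ 2 / G.dist c v ≤ dirichletEnergy G g := by
    refine le_trans (le_of_eq ?_) (sum_sq_div_mul_lapMatrix_mulVec_le_dirichletEnergy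
      (φ := fun v => (G.dist c v : ℝ)) (fun v => Nat.cast_nonneg _) fun v hv => ?_)
    · rw [sum_mul_lapMatrix_mulVec_dist hG (fun v => g v ^ 2 / G.dist c v), hgc,
        ← Finset.univ_inter (leavesFinset G), ← Finset.sum_ite_mem]
      simp only [ne_eq, OfNat.ofNat_ne_zero, not_false_eq_true, zero_pow, zero_div, mul_zero,
        sub_zero]
      refine Finset.sum_congr rfl fun v _ => ?_
      rcases eq_or_ne v c with rfl | hvc
      · simp [hgc]
      · have : Nontrivial V := ⟨v, c, hvc⟩
        rw [two_sub_degree_eq_ite_mem_leavesFinset hG.connected.preconnected (hdeg v hvc),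
          ite_mul, one_mul, zero_mul]
    · rw [Nat.cast_eq_zero, hG.connected.dist_eq_zero_iff] at hv
      rw [← hv, hgc]
  have hleaf (v : V) (hv : v ∈ leavesFinset G) : (f v - f c) ^ 2 ≤ r * (g v ^ 2 / G.dist c v) := by
    rw [← hg]
    rcases eq_or_ne v c with rfl | hvc
    · simp [hgc]
    · have hpos : (0 : ℝ) < G.dist c v := by
        exact_mod_cast hG.connected.pos_dist_of_ne hvc.symm
      rw [← mul_div_assoc, le_div_iff₀ hpos, mul_comm]
      gcongr
      exact hr v hv
  calc ∑ v ∈ leavesFinset G, (f v - f c) ^ 2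
      ≤ ∑ v ∈ leavesFinset G, r * (g v ^ 2 / G.dist c v) := Finset.sum_le_sum hleaf
    _ ≤ r * dirichletEnergy G g := by
        rw [← Finset.mul_sum]
        gcongr
    _ = r * dirichletEnergy G f := by rw [dirichletEnergy_const_add_mul, one_pow, one_mul]

end Leaves

section SteklovEig

variable {V : Type*} {B : Finset V}

theorem exists_mem_sum_eq_zero_of_two_le_finrank_map {F : Submodule ℝ (V → ℝ)}
    (hF : 2 ≤ Module.finrank ℝ
      (F.map (LinearMap.funLeft ℝ ℝ (fun x : {v // v ∈ B} => (x : V))))) :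
    ∃ f ∈ F, ∑ x ∈ B, f x = 0 ∧ 0 < ∑ x ∈ B, f x ^ 2 := by
  set W := F.map (LinearMap.funLeft ℝ ℝ (fun x : {v // v ∈ B} => (x : V)))
  let total : W →ₗ[ℝ] ℝ := (∑ i, LinearMap.proj i : ({v // v ∈ B} → ℝ) →ₗ[ℝ] ℝ).comp W.subtype
  have hker : LinearMap.ker total ≠ ⊥ := by
    apply LinearMap.ker_ne_bot_of_finrank_lt
    rw [Module.finrank_self]
    exact hF
  obtain ⟨⟨_, f, hf, rfl⟩, htotal, hne⟩ := (Submodule.ne_bot_iff _).1 hker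
  refine ⟨f, hf, ?_, ?_⟩
  · rw [← Finset.sum_attach]
    simpa [total, LinearMap.funLeft_apply] using htotal
  · obtain ⟨x, hx⟩ : ∃ x : {v // v ∈ B}, f x ≠ 0 := by
      by_contra! hzero
      exact hne (Subtype.ext (funext hzero))
    exact Finset.sum_pos' (fun _ _ => sq_nonneg _) ⟨x, x.2, by positivity⟩

variable [Fintype V] {G : SimpleGraph V}

/-- The upper bounds on the Rayleigh quotient `E(f) / ∑_B f²` over some space of functions whose
boundary values form a `k`-dimensional space; `steklovEig G B k` is the infimum of this set. -/
def steklovBounds (G : SimpleGraph V) (B : Finset V) (k : ℕ) : Set ℝ :=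
  { t : ℝ | ∃ F : Submodule ℝ (V → ℝ),
    Module.finrank ℝ (F.map (LinearMap.funLeft ℝ ℝ (fun x : {v // v ∈ B} => (x : V)))) = k ∧
    ∀ f ∈ F, dirichletEnergy G f ≤ t * ∑ x ∈ B, (f x) ^ 2 }

theorem le_of_mem_steklovBounds {k : ℕ} (hk : 2 ≤ k) {a t : ℝ}
    (ha : ∀ f : V → ℝ, ∑ x ∈ B, f x = 0 → a * ∑ x ∈ B, f x ^ 2 ≤ dirichletEnergy G f)
    (ht : t ∈ steklovBounds G B k) : a ≤ t := by
  obtain ⟨F, hF, hFt⟩ := ht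
  obtain ⟨f, hf, hsum, hpos⟩ := exists_mem_sum_eq_zero_of_two_le_finrank_map (hk.trans_eq hF.symm)
  exact le_of_mul_le_mul_right ((ha f hsum).trans (hFt f hf)) hpos

theorem dirichletEnergy_le_two_div_dist_mul_sum_sq (hG : G.IsTree) {x y : V} (hx : x ∈ B)
    (hy : y ∈ B) (hxy : x ≠ y) (α β : ℝ) :
    dirichletEnergy G (fun v => α + β * ((G.dist x v : ℝ) - G.dist y v)) ≤
      2 / G.dist x y * ∑ v ∈ B, (α + β * ((G.dist x v : ℝ) - G.dist y v)) ^ 2 := by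
  have hpos : (0 : ℝ) < G.dist x y := by exact_mod_cast hG.connected.pos_dist_of_ne hxy
  have hpair : (α - β * G.dist x y) ^ 2 + (α + β * G.dist x y) ^ 2 ≤
      ∑ v ∈ B, (α + β * ((G.dist x v : ℝ) - G.dist y v)) ^ 2 := by
    refine le_of_eq_of_le ?_ (Finset.sum_le_sum_of_subset_of_nonneg (s := {x, y})
      (Finset.insert_subset hx (Finset.singleton_subset_iff.2 hy)) fun _ _ _ => sq_nonneg _)
    rw [Finset.sum_pair hxy, SimpleGraph.dist_self, SimpleGraph.dist_self,
      SimpleGraph.dist_comm (u := y)]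
    push_cast
    ring
  calc dirichletEnergy G (fun v => α + β * ((G.dist x v : ℝ) - G.dist y v))
      = 4 * β ^ 2 * G.dist x y := by
        rw [dirichletEnergy_const_add_mul, dirichletEnergy_dist_sub_dist hG]
        ring
    _ ≤ 4 * α ^ 2 / G.dist x y + 4 * β ^ 2 * G.dist x y :=
        le_add_of_nonneg_left (by positivity)
    _ = 2 / G.dist x y * ((α - β * G.dist x y) ^ 2 + (α + β * G.dist x y) ^ 2) := by
        field_simp
        ring
    _ ≤ 2 / G.dist x y * ∑ v ∈ B, (α + β * ((G.dist x v : ℝ) - G.dist y v)) ^ 2 := by gcongr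

theorem two_div_dist_mem_steklovBounds (hG : G.IsTree) {x y : V} (hx : x ∈ B) (hy : y ∈ B)
    (hxy : x ≠ y) : 2 / (G.dist x y : ℝ) ∈ steklovBounds G B 2 := by
  have hpos : (0 : ℝ) < G.dist x y := by exact_mod_cast hG.connected.pos_dist_of_ne hxy
  let Φ : ℝ × ℝ →ₗ[ℝ] V → ℝ := (LinearMap.fst ℝ ℝ ℝ).smulRight 1 +
    (LinearMap.snd ℝ ℝ ℝ).smulRight fun v => (G.dist x v : ℝ) - G.dist y v
  have hΦ (α β : ℝ) : Φ (α, β) = fun v => α + β * ((G.dist x v : ℝ) - G.dist y v) := by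
    ext v
    simp [Φ]
  refine ⟨LinearMap.range Φ, ?_, ?_⟩
  · rw [← LinearMap.range_comp, LinearMap.finrank_range_of_inj]
    · simp
    · rw [← LinearMap.ker_eq_bot, LinearMap.ker_eq_bot']
      rintro ⟨α, β⟩ hαβ
      have hx_zero := congrFun hαβ ⟨x, hx⟩
      have hy_zero := congrFun hαβ ⟨y, hy⟩
      simp only [LinearMap.comp_apply, LinearMap.funLeft_apply, hΦ, SimpleGraph.dist_self,
        SimpleGraph.dist_comm (u := y), Nat.cast_zero, Pi.zero_apply] at hx_zero hy_zero
      have hα : α = 0 := by linarith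
      have hβ : β = 0 := (mul_eq_zero.1 (by linarith : β * G.dist x y = 0)).resolve_right hpos.ne'
      rw [hα, hβ, Prod.mk_zero_zero]
  · rintro _ ⟨⟨α, β⟩, rfl⟩
    rw [hΦ]
    exact dirichletEnergy_le_two_div_dist_mul_sum_sq hG hx hy hxy α β

theorem steklovEig_two_le_two_div_dist (hG : G.IsTree) {x y : V} (hx : x ∈ B) (hy : y ∈ B)
    (hxy : x ≠ y) : steklovEig G B 2 ≤ 2 / G.dist x y :=
  csInf_le ⟨0, fun _ => le_of_mem_steklovBounds le_rfl fun f _ => by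
    simpa using dirichletEnergy_nonneg f⟩ (two_div_dist_mem_steklovBounds hG hx hy hxy)

theorem le_steklovEig_two (hG : G.IsTree) (hB : B.Nontrivial) {a : ℝ}
    (ha : ∀ f : V → ℝ, ∑ x ∈ B, f x = 0 → a * ∑ x ∈ B, f x ^ 2 ≤ dirichletEnergy G f) :
    a ≤ steklovEig G B 2 := by
  obtain ⟨x, hx, y, hy, hxy⟩ := hB
  exact le_csInf ⟨_, two_div_dist_mem_steklovBounds hG hx hy hxy⟩
    fun _ => le_of_mem_steklovBounds le_rfl ha

theorem steklovEig_leaves_two_le (hG : G.IsTree) (hL : (leavesFinset G).Nontrivial) {k : ℕ}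
    (hk : (leavesFinset G).card * k + 2 < Fintype.card V) :
    steklovEig G (leavesFinset G) 2 ≤ 1 / (k + 1) := by
  obtain ⟨x, hx, y, hy, hdist⟩ := exists_leaves_lt_dist hG hL hk
  have hxy : x ≠ y := by
    rintro rfl
    simp at hdist
  have hdist' : (2 * (k + 1) : ℝ) ≤ G.dist x y := by exact_mod_cast hdist
  calc steklovEig G (leavesFinset G) 2
      ≤ 2 / G.dist x y := steklovEig_two_le_two_div_dist hG hx hy hxy
    _ ≤ 2 / (2 * (k + 1)) := by gcongr
    _ = 1 / (k + 1) := by field_simp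

theorem sum_sq_le_sum_sub_sq {ι : Type*} {s : Finset ι} {f : ι → ℝ} (hf : ∑ i ∈ s, f i = 0)
    (a : ℝ) : ∑ i ∈ s, f i ^ 2 ≤ ∑ i ∈ s, (f i - a) ^ 2 := by
  have hexpand : ∑ i ∈ s, (f i - a) ^ 2 = ∑ i ∈ s, f i ^ 2 + s.card * a ^ 2 := by
    simp only [sub_sq, Finset.sum_add_distrib, Finset.sum_sub_distrib, ← Finset.sum_mul,
      ← Finset.mul_sum, hf, Finset.sum_const, nsmul_eq_mul]
    ring
  rw [hexpand]
  exact le_add_of_nonneg_right (by positivity)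

theorem one_div_le_steklovEig_leaves_two (hG : G.IsTree) (hL : (leavesFinset G).Nontrivial) {c : V}
    (hdeg : ∀ v ≠ c, G.degree v ≤ 2) {r : ℕ} (hr : ∀ v ∈ leavesFinset G, G.dist c v ≤ r) :
    1 / (r : ℝ) ≤ steklovEig G (leavesFinset G) 2 := by
  refine le_steklovEig_two hG hL fun f hf => ?_
  rw [one_div]
  exact inv_mul_le_of_le_mul₀ (by positivity) (dirichletEnergy_nonneg f)
    ((sum_sq_le_sum_sub_sq hf (f c)).trans (sum_leaves_sq_sub_le_mul_dirichletEnergy hG hdeg hr f))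

end SteklovEig

section Spider

variable {b n : ℕ}

/-- The spider with `n > b` vertices, centre `0` and `b` legs of almost equal lengths: each `u ≠ 0`
is joined to `u - b`, where the subtraction is truncated. -/
def spider (b n : ℕ) : SimpleGraph (Fin n) :=
  SimpleGraph.fromRel fun u v => (v : ℕ) = u - b

theorem spider_adj {u v : Fin n} :
    (spider b n).Adj u v ↔ u ≠ v ∧ ((v : ℕ) = u - b ∨ (u : ℕ) = v - b) :=
  SimpleGraph.fromRel_adj _ _ _

variable [NeZero n]

theorem spider_exists_walk_length_le (s : ℕ) (u : Fin n) (hu : (u : ℕ) ≤ b * s) :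
    ∃ p : (spider b n).Walk 0 u, p.length ≤ s := by
  induction s generalizing u with
  | zero =>
    obtain rfl : u = 0 := Fin.ext (by simpa using hu)
    exact ⟨.nil, le_rfl⟩
  | succ s ih =>
    let v : Fin n := ⟨u - b, by omega⟩
    obtain ⟨p, hp⟩ := ih v (by simp only [v]; rw [Nat.mul_succ] at hu; omega)
    rcases eq_or_ne v u with hvu | hvu
    · exact ⟨p.copy rfl hvu, by rw [SimpleGraph.Walk.length_copy]; omega⟩
    · have hadj : (spider b n).Adj v u := spider_adj.2 ⟨hvu, Or.inr rfl⟩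
      exact ⟨p.concat hadj, by rw [SimpleGraph.Walk.length_concat]; omega⟩

theorem spider_dist_zero_le {s : ℕ} {u : Fin n} (hu : (u : ℕ) ≤ b * s) :
    (spider b n).dist 0 u ≤ s := by
  obtain ⟨p, hp⟩ := spider_exists_walk_length_le s u hu
  exact (SimpleGraph.dist_le p).trans hp

theorem spider_isTree (hb : 0 < b) : (spider b n).IsTree := by
  have hreach (u : Fin n) : (spider b n).Reachable 0 u :=
    (spider_exists_walk_length_le u u (Nat.le_mul_of_pos_left _ hb)).nonempty
  refine isTree_of_forall_adj_parent (c := 0) ⟨fun u v => (hreach u).symm.trans (hreach v)⟩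
    (fun u => ⟨u - b, by omega⟩) (Fin.ext (Nat.zero_sub b)) fun u v huv => ?_
  simpa only [Fin.ext_iff] using (spider_adj.1 huv).2

theorem spider_degree_zero (hn : b < n) : (spider b n).degree 0 = b := by
  have hnbr : (spider b n).neighborFinset 0 = Finset.Ioc 0 ⟨b, hn⟩ := by
    ext v
    simp only [SimpleGraph.mem_neighborFinset, spider_adj, ne_eq, Fin.ext_iff, Finset.mem_Ioc,
      Fin.lt_def, Fin.le_def, Fin.val_zero]
    omega
  rw [← SimpleGraph.card_neighborFinset_eq_degree, hnbr, Fin.card_Ioc]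
  simp

theorem spider_degree_le_two {u : Fin n} (hu : u ≠ 0) : (spider b n).degree u ≤ 2 := by
  have hu' : (u : ℕ) ≠ 0 := Fin.val_ne_zero_iff.2 hu
  have hmaps : ∀ v ∈ (spider b n).neighborFinset u,
      (v : ℕ) ∈ ({(u : ℕ) - b, u + b} : Finset ℕ) := by
    intro v hv
    have := (spider_adj.1 ((SimpleGraph.mem_neighborFinset _ _ _).1 hv)).2
    simp only [Finset.mem_insert, Finset.mem_singleton]
    omega
  rw [← SimpleGraph.card_neighborFinset_eq_degree]
  exact (Finset.card_le_card_of_injOn _ hmaps Fin.val_injective.injOn).trans Finset.card_le_two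

theorem spider_card_leavesFinset (hb : 2 ≤ b) (hn : b < n) :
    (leavesFinset (spider b n)).card = b := by
  have hdeg := spider_degree_zero hn
  rw [card_leavesFinset_eq_degree_of_forall_degree_le_two (spider_isTree (by omega))
    (fun _ => spider_degree_le_two) (by omega), hdeg]

end Spider

/-- Let `b ≥ 3`, `r ≥ 1`, and `m` be integers with `3 - b ≤ m ≤ 1`,
and set `n = b*r + m`; assume `n ≥ b + 1`. Then `σ_{2,max}(b,n) = 1/r`. -/
theorem stmt1 (b r : ℕ) (m : ℤ) (hb : 3 ≤ b) (hr : 1 ≤ r)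
    (hm1 : 3 - (b : ℤ) ≤ m) (hm2 : m ≤ 1)
    (n : ℕ) (hn : (n : ℤ) = b * r + m) (hnb : b + 1 ≤ n) :
    sigmaMax 2 b n = 1 / (r : ℝ) := by
  obtain ⟨k, rfl⟩ : ∃ k, r = k + 1 := ⟨r - 1, by omega⟩
  have : NeZero n := ⟨by omega⟩
  have hcard_le : n ≤ b * (k + 1) + 1 := by zify; push_cast at hn; linarith
  have hlt_card : b * k + 2 < n := by zify; push_cast at hn; linarith
  have leaves_nontrivial {G : SimpleGraph (Fin n)} (hGb : (leavesFinset G).card = b) :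
      (leavesFinset G).Nontrivial := Finset.one_lt_card_iff_nontrivial.1 (by omega)
  have hupper (G : SimpleGraph (Fin n)) (hG : G.IsTree) (hGb : (leavesFinset G).card = b) :
      steklovEig G (leavesFinset G) 2 ≤ 1 / ((k + 1 : ℕ) : ℝ) := by
    rw [Nat.cast_succ]
    exact steklovEig_leaves_two_le hG (leaves_nontrivial hGb) (by simpa [hGb] using hlt_card)
  have hspider : (spider b n).IsTree := spider_isTree (by omega)
  have hspider_card : (leavesFinset (spider b n)).card = b :=
    spider_card_leavesFinset (by omega) hnb
  have hlower : 1 / ((k + 1 : ℕ) : ℝ) ≤ steklovEig (spider b n) (leavesFinset (spider b n)) 2 :=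
    one_div_le_steklovEig_leaves_two hspider (leaves_nontrivial hspider_card)
      (fun _ => spider_degree_le_two) fun v _ =>
        spider_dist_zero_le (Nat.lt_succ_iff.1 (v.isLt.trans_le hcard_le))
  refine IsGreatest.csSup_eq ⟨⟨spider b n, hspider, hspider_card, ?_⟩, ?_⟩
  · exact hlower.antisymm (hupper _ hspider hspider_card)
  · rintro _ ⟨G, hG, hGb, rfl⟩
    exact hupper G hG hGb
end

section
/- Let b ≥ 3 and r ≥ 1 be integers and set n = br + 2. Then σ_{2,max}(b,n) = b/(b(r+1)−1) = 1/(r + 1 − 1/b), and the unique tree (up to isomorphism) with b leaves and n vertices attaining this maximum is the almost fork graph AF(b,r). -/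
open scoped BigOperators
open Classical

/-- The almost fork graph `AF(b,r)`: `b` paths glued at a common endpoint (`Sum.inr false`),
one of length `r+1` (path `0`, with extra tip `Sum.inr true`) and `b-1` of length `r`.
Vertex `Sum.inl (ℓ, i)` is the vertex of the `ℓ`-th path at distance `i+1` from the center. -/
def almostFork (b r : ℕ) : SimpleGraph ((Fin b × Fin r) ⊕ Bool) :=
  SimpleGraph.fromRel fun x y =>
    match x, y with
    | Sum.inr false, Sum.inl (_, i) => (i : ℕ) = 0
    | Sum.inl (ℓ, i), Sum.inl (m, j) => ℓ = m ∧ (j : ℕ) = (i : ℕ) + 1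
    | Sum.inl (ℓ, i), Sum.inr true => (ℓ : ℕ) = 0 ∧ (i : ℕ) = r - 1
    | _, _ => False

/-! On a tree the distance function `d(·, x)` has Laplacian `2 - deg - 2 δ_x`, so a charge `q` of
total `0` on the leaves has the potential `-½ ∑ q(x) d(·, x)`, whose energy is read off the
distances between leaves. A dipole on a pair of leaves at distance `D` thus gives `σ₂ ≤ 2 / D`. If
all leaves are within distance `2r + 1` of each other, the middle edge of a longest path has every
leaf at distance at most `r` from its nearer end, and counting vertices shows that all these
distances equal `r` once `n ≥ br + 2`. A uniform dipole across that edge, with `s` leaves on one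
side and `b - s` on the other, gives `σ₂ ≤ (r + s(b - s)/b)⁻¹`, which is largest for `s = 1` or
`s = b - 1`; then the tree is the almost fork. For the almost fork itself, Cauchy–Schwarz along
each arm bounds the energy from below. -/

namespace Steklov

open SimpleGraph
open scoped Matrix

section TreeMetric

variable {V : Type*} {G : SimpleGraph V}

lemma getVert_dist_eq_of_dist_add_dist (hG : G.IsTree) {c v x : V} (p : G.Walk c x)
    (hp : p.length = G.dist c x) (h : G.dist c v + G.dist v x = G.dist c x) :
    p.getVert (G.dist c v) = v := by
  obtain ⟨q₁, hq₁⟩ := hG.connected.exists_walk_length_eq_dist c v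
  obtain ⟨q₂, hq₂⟩ := hG.connected.exists_walk_length_eq_dist v x
  have hpq : p = q₁.append q₂ :=
    (hG.existsUnique_path c x).unique (p.isPath_of_length_eq_dist hp)
      ((q₁.append q₂).isPath_of_length_eq_dist (by rw [Walk.length_append]; omega))
  simp [hpq, Walk.getVert_append, hq₁]

lemma eq_of_dist_eq_of_dist_add_dist (hG : G.IsTree) {c u v x : V}
    (hu : G.dist c u + G.dist u x = G.dist c x) (hv : G.dist c v + G.dist v x = G.dist c x)
    (huv : G.dist c u = G.dist c v) : u = v := by
  obtain ⟨p, hp⟩ := hG.connected.exists_walk_length_eq_dist c x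
  rw [← getVert_dist_eq_of_dist_add_dist hG p hp hu, huv,
    getVert_dist_eq_of_dist_add_dist hG p hp hv]

lemma eq_of_adj_of_dist_add_one (hG : G.IsTree) {c x y z : V} (hy : G.Adj x y) (hz : G.Adj x z)
    (hcy : G.dist c y + 1 = G.dist c x) (hcz : G.dist c z + 1 = G.dist c x) : y = z :=
  eq_of_dist_eq_of_dist_add_dist hG (c := c) (x := x) (by rwa [dist_eq_one_iff_adj.2 hy.symm])
    (by rwa [dist_eq_one_iff_adj.2 hz.symm]) (by omega)

lemma dist_getVert (hG : G.Connected) {c x : V} (p : G.Walk c x) (hp : p.length = G.dist c x)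
    {k : ℕ} (hk : k ≤ p.length) : G.dist c (p.getVert k) = k := by
  have hle : G.dist c (p.getVert k) ≤ k := by simpa [hk] using dist_le (p.take k)
  have hdrop : G.dist (p.getVert k) x ≤ p.length - k := by simpa using dist_le (p.drop k)
  have := hG.dist_triangle (u := c) (v := p.getVert k) (w := x)
  omega

lemma dist_getVert_end (hG : G.Connected) {c x : V} (p : G.Walk c x)
    (hp : p.length = G.dist c x) {k : ℕ} (hk : k ≤ p.length) :
    G.dist (p.getVert k) x = G.dist c x - k := by
  have hrev := dist_getVert hG p.reverse (by rw [Walk.length_reverse, hp, dist_comm])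
    (k := p.length - k) (by simp)
  rwa [Walk.getVert_reverse, Nat.sub_sub_self hk, dist_comm, hp] at hrev

lemma exists_dist_eq_dist_add_dist (hG : G.Connected) {c x : V} {k : ℕ} (hk : k ≤ G.dist c x) :
    ∃ v, G.dist c v = k ∧ G.dist c v + G.dist v x = G.dist c x := by
  obtain ⟨p, hp⟩ := hG.exists_walk_length_eq_dist c x
  have hv := dist_getVert hG p hp (hp ▸ hk)
  exact ⟨p.getVert k, hv, by rw [hv, dist_getVert_end hG p hp (hp ▸ hk)]; omega⟩

lemma exists_adj_dist_add_one_eq (hG : G.Connected) {c x : V} (h : x ≠ c) :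
    ∃ y, G.Adj x y ∧ G.dist c y + 1 = G.dist c x := by
  have hpos := hG.pos_dist_of_ne h.symm
  obtain ⟨y, hy, hyx⟩ := exists_dist_eq_dist_add_dist hG (c := c) (x := x) (Nat.sub_le _ 1)
  exact ⟨y, (dist_eq_one_iff_adj.1 (by omega)).symm, by omega⟩

lemma dist_eq_dist_add_length_of_isPath_cons (hG : G.IsTree) {x c c' y : V} (h : G.Adj c c')
    (q : G.Walk c' y) (hq : (Walk.cons h q).IsPath) (hx : G.dist x c' = G.dist x c + 1) :
    G.dist x y = G.dist x c' + q.length := by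
  induction q generalizing c with
  | nil => simp
  | @cons c' d y h' q ih =>
    have hd : G.dist x d = G.dist x c' + 1 := by
      refine (hG.dist_eq_dist_add_one_of_adj x h').resolve_left fun hd => ?_
      obtain rfl := eq_of_adj_of_dist_add_one hG h.symm h' hx.symm hd.symm
      simp at hq
    rw [ih h' hq.of_cons hd, hd, Walk.length_cons]
    omega

lemma dist_eq_dist_add_one_add_dist (hG : G.IsTree) {c c' x y : V} (h : G.Adj c c')
    (hx : G.dist x c' = G.dist x c + 1) (hy : G.dist y c = G.dist y c' + 1) :
    G.dist x y = G.dist x c + 1 + G.dist c' y := by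
  obtain ⟨q, hq⟩ := hG.connected.exists_walk_length_eq_dist c' y
  have hpath : (Walk.cons h q).IsPath :=
    Walk.isPath_of_length_eq_dist _ <| by
      rw [Walk.length_cons, hq, dist_comm, dist_comm (u := c), hy]
  rw [dist_eq_dist_add_length_of_isPath_cons hG h q hpath hx, hx, hq]

lemma mem_leavesFinset [Fintype V] {v : V} : v ∈ leavesFinset G ↔ ∃! w, G.Adj v w := by
  simp [leavesFinset, degree_eq_one_iff_existsUnique_adj]

lemma exists_mem_leavesFinset_dist_add_dist [Fintype V] (hG : G.IsTree) {c v : V} (hv : v ≠ c) :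
    ∃ x ∈ leavesFinset G, G.dist c v + G.dist v x = G.dist c x := by
  obtain ⟨x, hx, hmax⟩ := (Finset.univ.filter fun x =>
    G.dist c v + G.dist v x = G.dist c x).exists_max_image (G.dist c) ⟨v, by simp⟩
  simp only [Finset.mem_filter, Finset.mem_univ, true_and] at hx hmax
  have hvpos := hG.connected.pos_dist_of_ne hv.symm
  obtain ⟨p, hp, hpd⟩ := exists_adj_dist_add_one_eq hG.connected (c := c) (x := x) <| by
    rintro rfl
    simp only [dist_self] at hx
    omega
  refine ⟨x, mem_leavesFinset.2 ⟨p, hp, fun y hy => ?_⟩, hx⟩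
  refine eq_of_adj_of_dist_add_one hG hy hp ?_ hpd
  refine ((hG.dist_eq_dist_add_one_of_adj c hy).resolve_right fun hfar => ?_).symm
  have hxy := dist_eq_one_iff_adj.2 hy
  have hvy := hG.connected.dist_triangle (u := v) (v := x) (w := y)
  have hcy := hG.connected.dist_triangle (u := c) (v := v) (w := y)
  have := hmax y (by omega)
  omega

end TreeMetric

section TrialSpaces

variable {V : Type*}

lemma exists_mem_sum_eq_zero_of_one_lt_finrank {B : Finset V} (F : Submodule ℝ (V → ℝ))
    (hF : 1 < Module.finrank ℝ
      (F.map (LinearMap.funLeft ℝ ℝ (fun x : {v // v ∈ B} => (x : V))))) :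
    ∃ f ∈ F, ∑ x ∈ B, f x = 0 ∧ 0 < ∑ x ∈ B, (f x) ^ 2 := by
  set R := LinearMap.funLeft ℝ ℝ (fun x : {v // v ∈ B} => (x : V))
  let total : (F.map R) →ₗ[ℝ] ℝ := (∑ i, LinearMap.proj i) ∘ₗ (F.map R).subtype
  obtain ⟨⟨g, hg⟩, hg0, hgne⟩ := (Submodule.ne_bot_iff _).1
    (LinearMap.ker_ne_bot_of_finrank_lt (f := total) (by rwa [Module.finrank_self]))
  obtain ⟨f, hfF, rfl⟩ := Submodule.mem_map.1 hg
  refine ⟨f, hfF, ?_, ?_⟩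
  · have hsum : ∑ i : {v // v ∈ B}, f i = 0 := by simpa [total, R] using hg0
    rwa [Finset.sum_coe_sort B f] at hsum
  · refine (Finset.sum_nonneg fun x _ => sq_nonneg _).lt_of_ne fun h0 => hgne ?_
    have hvanish := (Finset.sum_eq_zero_iff_of_nonneg fun x _ => sq_nonneg (f x)).1 h0.symm
    ext i
    exact pow_eq_zero_iff two_ne_zero |>.1 (hvanish i i.2)

lemma finrank_map_span_pair_one {B : Finset V} {f q : V → ℝ} (hq0 : ∑ x ∈ B, q x = 0)
    (hqf : ∑ x ∈ B, q x * f x ≠ 0) :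
    Module.finrank ℝ ((Submodule.span ℝ (Set.range ![f, fun _ => 1])).map
      (LinearMap.funLeft ℝ ℝ (fun x : {v // v ∈ B} => (x : V)))) = 2 := by
  set R := LinearMap.funLeft ℝ ℝ (fun x : {v // v ∈ B} => (x : V))
  have hpair : R ∘ ![f, fun _ => 1] = ![R f, R (fun _ => 1)] := by
    ext i; fin_cases i <;> rfl
  have hli : LinearIndependent ℝ ![R f, R (fun _ => 1)] := by
    refine LinearIndependent.pair_iff.2 fun s t hst => ?_
    have hB : ∀ x ∈ B, s * f x + t = 0 := fun x hx => by
      simpa [R, LinearMap.funLeft_apply] using congrFun hst ⟨x, hx⟩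
    have hs : s = 0 := by
      refine (mul_eq_zero.1 ?_).resolve_right hqf
      calc s * ∑ x ∈ B, q x * f x = ∑ x ∈ B, q x * (s * f x + t) := by
            simp only [mul_add, Finset.sum_add_distrib, ← Finset.sum_mul, hq0, Finset.mul_sum]
            simp only [mul_left_comm, zero_mul, add_zero]
        _ = 0 := Finset.sum_eq_zero fun x hx => by rw [hB x hx, mul_zero]
    obtain ⟨x, hx, -⟩ := Finset.exists_ne_zero_of_sum_ne_zero hqf
    exact ⟨hs, by simpa [hs] using hB x hx⟩
  rw [Submodule.map_span, ← Set.range_comp, hpair, finrank_span_eq_card hli, Fintype.card_fin]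

variable [Fintype V]

/-- The set of upper bounds for `σ_k(G, B)` given by the Rayleigh quotients of trial spaces whose
restriction to `B` is `k`-dimensional; `steklovEig G B k` is its infimum by definition. -/
def trialBounds (G : SimpleGraph V) (B : Finset V) (k : ℕ) : Set ℝ :=
  { t : ℝ | ∃ F : Submodule ℝ (V → ℝ),
    Module.finrank ℝ (F.map (LinearMap.funLeft ℝ ℝ (fun x : {v // v ∈ B} => (x : V)))) = k ∧
    ∀ f ∈ F, dirichletEnergy G f ≤ t * ∑ x ∈ B, (f x) ^ 2 }

lemma dirichletEnergy_nonneg (G : SimpleGraph V) (f : V → ℝ) : 0 ≤ dirichletEnergy G f :=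
  div_nonneg (Finset.sum_nonneg fun x _ => Finset.sum_nonneg fun y _ => by
    split_ifs <;> positivity) zero_le_two

lemma dirichletEnergy_eq_dotProduct (G : SimpleGraph V) (f : V → ℝ) :
    dirichletEnergy G f = f ⬝ᵥ G.lapMatrix ℝ *ᵥ f := by
  rw [← Matrix.toLinearMap₂'_apply', lapMatrix_toLinearMap₂', dirichletEnergy]

lemma dirichletEnergy_smul_add_const (G : SimpleGraph V) (f : V → ℝ) (α β : ℝ) :
    dirichletEnergy G (fun x => α * f x + β) = α ^ 2 * dirichletEnergy G f := by
  simp only [dirichletEnergy, add_sub_add_right_eq_sub, ← mul_sub, mul_pow, mul_div_assoc',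
    Finset.mul_sum, mul_ite, mul_zero]

variable {G : SimpleGraph V} {B : Finset V} {k : ℕ} {t : ℝ}

lemma steklovEig_le_of_mem_trialBounds (hk : 1 < k) (ht : t ∈ trialBounds G B k) :
    steklovEig G B k ≤ t := by
  refine csInf_le ⟨0, ?_⟩ ht
  rintro s ⟨F, hF, hs⟩
  obtain ⟨f, hf, -, hpos⟩ := exists_mem_sum_eq_zero_of_one_lt_finrank F (hF ▸ hk)
  exact nonneg_of_mul_nonneg_left ((dirichletEnergy_nonneg G f).trans (hs f hf)) hpos

lemma le_steklovEig (hk : 1 < k) (hne : (trialBounds G B k).Nonempty)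
    (h : ∀ f : V → ℝ, ∑ x ∈ B, f x = 0 → t * ∑ x ∈ B, (f x) ^ 2 ≤ dirichletEnergy G f) :
    t ≤ steklovEig G B k := by
  refine le_csInf hne ?_
  rintro s ⟨F, hF, hs⟩
  obtain ⟨f, hf, hmean, hpos⟩ := exists_mem_sum_eq_zero_of_one_lt_finrank F (hF ▸ hk)
  exact le_of_mul_le_mul_right ((h f hmean).trans (hs f hf)) hpos

lemma mem_trialBounds_of_le {s : ℝ} (hs : s ∈ trialBounds G B k) (hst : s ≤ t) :
    t ∈ trialBounds G B k := by
  obtain ⟨F, hF, hFs⟩ := hs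
  exact ⟨F, hF, fun f hf => (hFs f hf).trans <|
    mul_le_mul_of_nonneg_right hst (Finset.sum_nonneg fun x _ => sq_nonneg _)⟩

lemma sum_lapMatrix_mulVec (G : SimpleGraph V) (f : V → ℝ) :
    ∑ x, (G.lapMatrix ℝ *ᵥ f) x = 0 := by
  have hconst : Matrix.vecMul 1 (G.lapMatrix ℝ) = 0 := by
    rw [← Matrix.mulVec_transpose, (G.isSymm_lapMatrix (R := ℝ)).eq]
    exact lapMatrix_mulVec_const_eq_zero (R := ℝ) G
  rw [← one_dotProduct, Matrix.dotProduct_mulVec, hconst, zero_dotProduct]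

lemma sum_sq_div_dirichletEnergy_mem_trialBounds {f : V → ℝ}
    (hf : ∀ x ∉ B, (G.lapMatrix ℝ *ᵥ f) x = 0) (hpos : 0 < dirichletEnergy G f) :
    (∑ x ∈ B, (G.lapMatrix ℝ *ᵥ f) x ^ 2) / dirichletEnergy G f ∈ trialBounds G B 2 := by
  set q := G.lapMatrix ℝ *ᵥ f with hq
  have hq0 : ∑ x ∈ B, q x = 0 := by
    rw [Finset.sum_subset B.subset_univ fun x _ hx => hf x hx, sum_lapMatrix_mulVec]
  have hqf : ∑ x ∈ B, q x * f x = dirichletEnergy G f := by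
    rw [dirichletEnergy_eq_dotProduct, ← hq, dotProduct_comm, dotProduct,
      Finset.sum_subset B.subset_univ fun x _ hx => by rw [hf x hx, zero_mul]]
  refine ⟨_, finrank_map_span_pair_one hq0 (hqf ▸ hpos.ne'), fun g hg => ?_⟩
  simp only [Matrix.range_cons, Matrix.range_empty, Set.union_empty, Set.singleton_union,
    Submodule.mem_span_pair] at hg
  obtain ⟨α, β, rfl⟩ := hg
  have hg : α • f + β • (fun _ : V => (1 : ℝ)) = fun x => α * f x + β := by
    ext x; simp
  have hqg : ∑ x ∈ B, q x * (α * f x + β) = α * dirichletEnergy G f := by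
    simp only [mul_add, Finset.sum_add_distrib, ← Finset.sum_mul, hq0, ← hqf, Finset.mul_sum]
    simp only [mul_left_comm, zero_mul, add_zero]
  have hcs := Finset.sum_mul_sq_le_sq_mul_sq B q (fun x => α * f x + β)
  rw [hqg] at hcs
  rw [hg, dirichletEnergy_smul_add_const, div_mul_eq_mul_div, le_div_iff₀ hpos]
  linarith

end TrialSpaces

section DistancePotential

variable {V : Type*} {G : SimpleGraph V} {L L' : Finset V}

lemma inv_card_mul_sum_dist_le (hL : L.Nonempty) {a : ℝ}
    (ha : ∀ x ∈ L, ∀ y ∈ L, x ≠ y → (G.dist x y : ℝ) ≤ a) :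
    (L.card : ℝ)⁻¹ * ∑ x ∈ L, ((L.card : ℝ)⁻¹ * ∑ y ∈ L, (G.dist y x : ℝ))
      ≤ a * (1 - (L.card : ℝ)⁻¹) := by
  have : (0 : ℝ) < L.card := by exact_mod_cast hL.card_pos
  have hrow : ∀ x ∈ L, ∑ y ∈ L, (G.dist y x : ℝ) ≤ (L.card - 1) * a := fun x hx => by
    rw [← Finset.sum_erase L (a := x) (by simp)]
    calc ∑ y ∈ L.erase x, (G.dist y x : ℝ) ≤ (L.erase x).card • a :=
          Finset.sum_le_card_nsmul _ _ _ fun y hy =>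
            ha y (Finset.mem_of_mem_erase hy) x hx (Finset.ne_of_mem_erase hy)
      _ = (L.card - 1) * a := by rw [nsmul_eq_mul, Finset.cast_card_erase_of_mem hx]
  calc (L.card : ℝ)⁻¹ * ∑ x ∈ L, ((L.card : ℝ)⁻¹ * ∑ y ∈ L, (G.dist y x : ℝ))
      ≤ (L.card : ℝ)⁻¹ * ∑ _x ∈ L, ((L.card : ℝ)⁻¹ * ((L.card - 1) * a)) := by
        gcongr with x hx
        exact hrow x hx
    _ = a * (1 - (L.card : ℝ)⁻¹) := by
        rw [Finset.sum_const, nsmul_eq_mul]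
        field_simp

lemma le_inv_card_mul_sum_dist (hL : L.Nonempty) (hL' : L'.Nonempty) {D : ℝ}
    (hD : ∀ x ∈ L, ∀ y ∈ L', D ≤ G.dist y x) :
    D ≤ (L.card : ℝ)⁻¹ * ∑ x ∈ L, ((L'.card : ℝ)⁻¹ * ∑ y ∈ L', (G.dist y x : ℝ)) := by
  calc D = (L.card : ℝ)⁻¹ * ∑ _x ∈ L, ((L'.card : ℝ)⁻¹ * ∑ _y ∈ L', D) := by
        simp [hL.card_ne_zero, hL'.card_ne_zero]
    _ ≤ _ := by
        gcongr with x hx y hy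
        exact hD x hx y hy

variable [Fintype V]

lemma lapMatrix_mulVec_dist (hG : G.IsTree) (c x : V) :
    (G.lapMatrix ℝ *ᵥ fun y => (G.dist c y : ℝ)) x
      = 2 - G.degree x - if x = c then 2 else 0 := by
  rw [lapMatrix_mulVec_apply]
  rcases eq_or_ne x c with rfl | hx
  · have hone : ∀ y ∈ G.neighborFinset x, (G.dist x y : ℝ) = 1 := fun y hy => by
      rw [dist_eq_one_iff_adj.2 ((G.mem_neighborFinset x y).1 hy), Nat.cast_one]
    simp [Finset.sum_congr rfl hone]
  · obtain ⟨p, hp, hpd⟩ := exists_adj_dist_add_one_eq hG.connected hx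
    have hstep : ∀ y ∈ G.neighborFinset x,
        (G.dist c y : ℝ) = (G.dist c x + 1) - if y = p then 2 else 0 := fun y hy => by
      rw [mem_neighborFinset] at hy
      rcases hG.dist_eq_dist_add_one_of_adj c hy with hyd | hyd
      · rw [if_pos (eq_of_adj_of_dist_add_one hG hy hp hyd.symm hpd), hyd]
        push_cast
        ring
      · rw [if_neg (by rintro rfl; omega), hyd]
        push_cast
        ring
    rw [Finset.sum_congr rfl hstep, Finset.sum_sub_distrib, Finset.sum_ite_eq_of_mem' _ _ _
      ((G.mem_neighborFinset x p).2 hp), Finset.sum_const, card_neighborFinset_eq_degree, if_neg hx]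
    simp only [nsmul_eq_mul]
    ring

/-- The potential on a tree generated by the charge distribution `q`, i.e. the convolution of `q`
with the Green function `-d(x, y) / 2`. For charges of total mass zero its Laplacian is `q`. -/
noncomputable def chargePotential (G : SimpleGraph V) (q : V → ℝ) : V → ℝ :=
  (-1 / 2 : ℝ) • ∑ i, q i • fun x => (G.dist i x : ℝ)

lemma lapMatrix_mulVec_chargePotential (hG : G.IsTree) {q : V → ℝ} (hq : ∑ x, q x = 0) :
    G.lapMatrix ℝ *ᵥ chargePotential G q = q := by
  ext x
  simp only [chargePotential, Matrix.mulVec_smul, Matrix.mulVec_sum, Pi.smul_apply,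
    Finset.sum_apply, lapMatrix_mulVec_dist hG, smul_eq_mul, mul_sub (q _), Finset.sum_sub_distrib,
    ← Finset.sum_mul, hq, mul_ite, mul_zero, Finset.sum_ite_eq, Finset.mem_univ, if_true]
  ring

lemma dirichletEnergy_chargePotential (hG : G.IsTree) {q : V → ℝ} (hq : ∑ x, q x = 0) :
    dirichletEnergy G (chargePotential G q)
      = -1 / 2 * ∑ x, q x * ∑ y, q y * G.dist y x := by
  rw [dirichletEnergy_eq_dotProduct, lapMatrix_mulVec_chargePotential hG hq, dotProduct_comm,
    dotProduct, Finset.mul_sum]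
  refine Finset.sum_congr rfl fun x _ => ?_
  simp only [chargePotential, Pi.smul_apply, Finset.sum_apply, smul_eq_mul]
  ring

/-- The charge distribution placing total charge `1` uniformly on `L` and total charge `-1`
uniformly on `L'`. -/
noncomputable def dipole (L L' : Finset V) (x : V) : ℝ :=
  (if x ∈ L then (L.card : ℝ)⁻¹ else 0) - if x ∈ L' then (L'.card : ℝ)⁻¹ else 0

lemma sum_dipole_mul (L L' : Finset V) (h : V → ℝ) :
    ∑ x, dipole L L' x * h x
      = (L.card : ℝ)⁻¹ * ∑ x ∈ L, h x - (L'.card : ℝ)⁻¹ * ∑ x ∈ L', h x := by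
  simp [dipole, sub_mul, Finset.sum_sub_distrib, Finset.mul_sum, ite_mul, Finset.sum_ite_mem]

lemma sum_dipole (hL : L.Nonempty) (hL' : L'.Nonempty) : ∑ x, dipole L L' x = 0 := by
  simpa [hL.card_ne_zero, hL'.card_ne_zero] using sum_dipole_mul L L' fun _ => 1

lemma sum_dipole_sq (hL : L.Nonempty) (hL' : L'.Nonempty) (hdisj : Disjoint L L') :
    ∑ x, dipole L L' x ^ 2 = (L.card : ℝ)⁻¹ + (L'.card : ℝ)⁻¹ := by
  have hpos : ∀ x ∈ L, dipole L L' x = (L.card : ℝ)⁻¹ := fun x hx => by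
    simp [dipole, hx, Finset.disjoint_left.1 hdisj hx]
  have hneg : ∀ x ∈ L', dipole L L' x = -(L'.card : ℝ)⁻¹ := fun x hx => by
    simp [dipole, hx, Finset.disjoint_right.1 hdisj hx]
  simp only [sq]
  rw [sum_dipole_mul, Finset.sum_congr rfl hpos, Finset.sum_congr rfl hneg]
  simp [hL.card_ne_zero, hL'.card_ne_zero]

lemma le_dirichletEnergy_chargePotential_dipole (hG : G.IsTree) (hL : L.Nonempty)
    (hL' : L'.Nonempty) {a D : ℝ} (ha : ∀ x ∈ L, ∀ y ∈ L, x ≠ y → (G.dist x y : ℝ) ≤ a)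
    (ha' : ∀ x ∈ L', ∀ y ∈ L', x ≠ y → (G.dist x y : ℝ) ≤ a)
    (hD : ∀ x ∈ L, ∀ y ∈ L', D ≤ G.dist x y) :
    D - a + a / 2 * ((L.card : ℝ)⁻¹ + (L'.card : ℝ)⁻¹)
      ≤ dirichletEnergy G (chargePotential G (dipole L L')) := by
  rw [dirichletEnergy_chargePotential hG (sum_dipole hL hL')]
  simp only [sum_dipole_mul, Finset.sum_sub_distrib, mul_sub]
  have hLL := inv_card_mul_sum_dist_le hL ha
  have hLL' := inv_card_mul_sum_dist_le hL' ha'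
  have hcross := le_inv_card_mul_sum_dist hL hL' fun x hx y hy => by
    rw [dist_comm]; exact hD x hx y hy
  have hcross' := le_inv_card_mul_sum_dist hL' hL fun y hy x hx => hD x hx y hy
  linarith

lemma inv_mem_trialBounds_of_dist_le (hG : G.IsTree) {B : Finset V} (hLB : L ⊆ B) (hLB' : L' ⊆ B)
    (hL : L.Nonempty) (hL' : L'.Nonempty) (hdisj : Disjoint L L') {a D : ℝ} (h0a : 0 ≤ a)
    (haD : a < D) (ha : ∀ x ∈ L, ∀ y ∈ L, x ≠ y → (G.dist x y : ℝ) ≤ a)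
    (ha' : ∀ x ∈ L', ∀ y ∈ L', x ≠ y → (G.dist x y : ℝ) ≤ a)
    (hD : ∀ x ∈ L, ∀ y ∈ L', D ≤ G.dist x y) :
    (a / 2 + (D - a) / ((L.card : ℝ)⁻¹ + (L'.card : ℝ)⁻¹))⁻¹ ∈ trialBounds G B 2 := by
  set κ := (L.card : ℝ)⁻¹ + (L'.card : ℝ)⁻¹
  have hκ : 0 < κ := by
    have := hL.card_pos
    have := hL'.card_pos
    positivity
  have hE := le_dirichletEnergy_chargePotential_dipole hG hL hL' ha ha' hD
  have hElower : 0 < D - a + a / 2 * κ := by have := sub_pos.2 haD; positivity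
  have hqB : ∀ x ∉ B, dipole L L' x = 0 := fun x hx => by
    rw [dipole, if_neg fun h => hx (hLB h), if_neg fun h => hx (hLB' h), sub_zero]
  have hlap := lapMatrix_mulVec_chargePotential hG (sum_dipole hL hL')
  have hmem := sum_sq_div_dirichletEnergy_mem_trialBounds (B := B)
    (fun x hx => by rw [hlap]; exact hqB x hx) (hElower.trans_le hE)
  refine mem_trialBounds_of_le hmem ?_
  rw [hlap, Finset.sum_subset B.subset_univ fun x _ hx => by rw [hqB x hx, zero_pow two_ne_zero],
    sum_dipole_sq hL hL' hdisj]
  calc κ / dirichletEnergy G (chargePotential G (dipole L L'))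
      ≤ κ / (D - a + a / 2 * κ) := by gcongr
    _ = (a / 2 + (D - a) / κ)⁻¹ := by field_simp; ring

lemma two_div_dist_mem_trialBounds (hG : G.IsTree) {B : Finset V} {i j : V} (hi : i ∈ B)
    (hj : j ∈ B) (hij : i ≠ j) : 2 / (G.dist i j : ℝ) ∈ trialBounds G B 2 := by
  have hpos : (0 : ℝ) < G.dist i j := by exact_mod_cast hG.connected.pos_dist_of_ne hij
  convert inv_mem_trialBounds_of_dist_le hG (L := {i}) (L' := {j}) (B := B) (a := 0)
    (D := G.dist i j) (by simpa) (by simpa) (by simp) (by simp) (by simpa) le_rfl hpos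
    (by simp) (by simp) (by simp) using 1
  norm_num

end DistancePotential

section BalancedEdge

variable {V : Type*} {G : SimpleGraph V}

lemma exists_ne_forall_dist_le (hG : G.Connected) {B : Finset V} (hB : 1 < B.card) :
    ∃ i ∈ B, ∃ j ∈ B, i ≠ j ∧ ∀ x ∈ B, ∀ y ∈ B, G.dist x y ≤ G.dist i j := by
  obtain ⟨a, ha, a', ha', hne⟩ := Finset.one_lt_card.1 hB
  obtain ⟨⟨i, j⟩, hij, hmax⟩ := Finset.exists_max_image (B ×ˢ B) (fun p => G.dist p.1 p.2)
    ⟨(a, a'), Finset.mk_mem_product ha ha'⟩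
  obtain ⟨hi, hj⟩ := Finset.mem_product.1 hij
  have hpos : 0 < G.dist i j :=
    (hG.pos_dist_of_ne hne).trans_le (hmax (a, a') (Finset.mk_mem_product ha ha'))
  refine ⟨i, hi, j, hj, ?_, fun x hx y hy => hmax (x, y) (Finset.mk_mem_product hx hy)⟩
  rintro rfl
  simp at hpos

lemma exists_adj_forall_dist_le_of_forall_dist_le (hG : G.IsTree) {B : Finset V} {r : ℕ}
    (hB : 1 < B.card) (hdist : ∀ i ∈ B, ∀ j ∈ B, G.dist i j ≤ 2 * r + 1) :
    ∃ c c', G.Adj c c' ∧ ∀ x ∈ B, (G.dist x c ≤ r ∧ G.dist x c' = G.dist x c + 1) ∨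
      (G.dist x c' ≤ r ∧ G.dist x c = G.dist x c' + 1) := by
  obtain ⟨i, hi, j, hj, hij, hmax⟩ := exists_ne_forall_dist_le hG.connected hB
  have hpos := hG.connected.pos_dist_of_ne hij
  have hle := hdist i hi j hj
  obtain ⟨w, hw⟩ := hG.connected.exists_walk_length_eq_dist i j
  obtain ⟨m, hmr, hm, hjm⟩ : ∃ m, m ≤ r ∧ m + 1 ≤ G.dist i j ∧ G.dist i j ≤ m + 1 + r :=
    ⟨min r (G.dist i j - 1), by omega, by omega, by omega⟩
  have hadj : G.Adj (w.getVert m) (w.getVert (m + 1)) := w.adj_getVert_succ (by omega)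
  have hic := dist_getVert hG.connected w hw (k := m) (by omega)
  have hic' := dist_getVert hG.connected w hw (k := m + 1) (by omega)
  have hcj := dist_getVert_end hG.connected w hw (k := m) (by omega)
  have hcj' := dist_getVert_end hG.connected w hw (k := m + 1) (by omega)
  set c := w.getVert m
  set c' := w.getVert (m + 1)
  refine ⟨c, c', hadj, fun x hx => ?_⟩
  rcases hG.dist_eq_dist_add_one_of_adj x hadj with hxc | hxc
  · have hxi := dist_eq_dist_add_one_add_dist hG hadj.symm hxc (by omega : G.dist i c' = _)
    have := hmax x hx i hi
    rw [dist_comm (u := c)] at hxi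
    exact Or.inr ⟨by omega, hxc⟩
  · have hxj := dist_eq_dist_add_one_add_dist hG hadj hxc (y := j)
      (by rw [dist_comm, hcj, dist_comm (u := j), hcj']; omega)
    have := hmax x hx j hj
    exact Or.inl ⟨by omega, hxc⟩

lemma dist_lt_of_adj_of_dist_add_dist (hG : G.IsTree) {c c' v x : V} (hcc' : G.Adj c c')
    (hvc : v ≠ c) (hvc' : v ≠ c') (hv : G.dist c v + G.dist v x = G.dist c x) :
    G.dist v x < G.dist c x ∧ G.dist v x < G.dist c' x := by
  have hpos := hG.connected.pos_dist_of_ne hvc.symm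
  refine ⟨by omega, ?_⟩
  have hone := dist_eq_one_iff_adj.2 hcc'
  have htri := hG.connected.dist_triangle (u := c) (v := c') (w := x)
  have hcv : G.dist c' x + 1 = G.dist c x → G.dist c v ≠ 1 := fun hx hcv =>
    hvc' (eq_of_dist_eq_of_dist_add_dist hG hv (by omega : G.dist c c' + _ = _) (by omega))
  omega

variable [Fintype V] {r : ℕ} {c c' : V}

/-- An edge `cc'` such that every leaf is at distance exactly `r` from the nearer of its two
endpoints. -/
def IsBalancedEdge (G : SimpleGraph V) (r : ℕ) (c c' : V) : Prop :=
  G.Adj c c' ∧ ∀ x ∈ leavesFinset G, (G.dist x c = r ∧ G.dist x c' = r + 1) ∨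
    (G.dist x c' = r ∧ G.dist x c = r + 1)

/-- The leaves at distance `r` from `c`. For a balanced edge `cc'` these are the leaves on the side
of `c`. -/
noncomputable def nearLeaves (G : SimpleGraph V) (r : ℕ) (c : V) : Finset V :=
  (leavesFinset G).filter fun x => G.dist x c = r

/-- A vertex `v` off the edge is determined by a leaf `x` below it and the distance `d(v, x) < r`,
so a tree with at least `b r + 2` vertices must use every such pair. -/
lemma isBalancedEdge_of_card_le (hG : G.IsTree) (hr : 1 ≤ r)
    (hV : (leavesFinset G).card * r + 2 ≤ Fintype.card V) (hcc' : G.Adj c c')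
    (hleaf : ∀ x ∈ leavesFinset G, (G.dist x c ≤ r ∧ G.dist x c' = G.dist x c + 1) ∨
      (G.dist x c' ≤ r ∧ G.dist x c = G.dist x c' + 1)) :
    IsBalancedEdge G r c c' := by
  choose! leaf hleaf_mem hleaf_dist using fun v (hv : v ≠ c) =>
    exists_mem_leavesFinset_dist_add_dist hG hv
  have hlt : ∀ v ≠ c, v ≠ c' →
      G.dist v (leaf v) < G.dist (leaf v) c ∧ G.dist v (leaf v) < G.dist (leaf v) c' := by
    intro v hvc hvc'
    rw [dist_comm (u := leaf v), dist_comm (u := leaf v)]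
    exact dist_lt_of_adj_of_dist_add_dist hG hcc' hvc hvc' (hleaf_dist v hvc)
  set A : Finset V := {c, c'}ᶜ
  have hA : ∀ v ∈ A, v ≠ c ∧ v ≠ c' := fun v hv => by simpa [A] using hv
  have hsurj : Set.SurjOn (fun v => (leaf v, G.dist v (leaf v))) A
      (leavesFinset G ×ˢ Finset.range r : Finset (V × ℕ)) := by
    refine Finset.surjOn_of_injOn_of_card_le _ (fun v hv => ?_) (fun u hu v hv huv => ?_) ?_
    · obtain ⟨hvc, hvc'⟩ := hA v hv
      have := hlt v hvc hvc'
      refine Finset.mem_product.2 ⟨hleaf_mem v hvc, Finset.mem_range.2 ?_⟩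
      rcases hleaf _ (hleaf_mem v hvc) with h | h <;> omega
    · obtain ⟨hxuv, hduv⟩ := Prod.mk.inj huv
      have hu' := hleaf_dist u (hA u hu).1
      have hv' := hleaf_dist v (hA v hv).1
      rw [← hxuv] at hv' hduv
      exact eq_of_dist_eq_of_dist_add_dist hG hu' hv' (by omega)
    · rw [Finset.card_product, Finset.card_range, Finset.card_compl, Finset.card_pair hcc'.ne]
      omega
  refine ⟨hcc', fun x hx => ?_⟩
  obtain ⟨v, hvA, hv⟩ := hsurj (show (x, r - 1) ∈ _ from
    Finset.mem_product.2 ⟨hx, Finset.mem_range.2 (by omega)⟩)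
  obtain ⟨hxv, hdv⟩ := Prod.mk.inj hv
  have := hlt v (hA v hvA).1 (hA v hvA).2
  rw [hdv, hxv] at this
  rcases hleaf x hx with h | h <;> omega

namespace IsBalancedEdge

lemma symm (h : IsBalancedEdge G r c c') : IsBalancedEdge G r c' c :=
  ⟨h.1.symm, fun x hx => (h.2 x hx).symm⟩

lemma nearLeaves_nonempty (hG : G.IsTree) (h : IsBalancedEdge G r c c') :
    (nearLeaves G r c).Nonempty := by
  obtain ⟨x, hx, hxd⟩ := exists_mem_leavesFinset_dist_add_dist hG h.1.ne
  have hone := dist_eq_one_iff_adj.2 h.1.symm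
  rw [hone, dist_comm, dist_comm (u := c')] at hxd
  refine ⟨x, Finset.mem_filter.2 ⟨hx, ?_⟩⟩
  rcases h.2 x hx with h | h <;> omega

lemma mem_nearLeaves_or (h : IsBalancedEdge G r c c') {x : V} (hx : x ∈ leavesFinset G) :
    x ∈ nearLeaves G r c ∨ x ∈ nearLeaves G r c' :=
  (h.2 x hx).imp (fun h => Finset.mem_filter.2 ⟨hx, h.1⟩) fun h => Finset.mem_filter.2 ⟨hx, h.1⟩

lemma dist_of_mem_nearLeaves (h : IsBalancedEdge G r c c') {x : V} (hx : x ∈ nearLeaves G r c) :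
    G.dist x c = r ∧ G.dist x c' = r + 1 := by
  obtain ⟨hx, hxc⟩ := Finset.mem_filter.1 hx
  rcases h.2 x hx with h | h
  · exact h
  · omega

lemma disjoint_nearLeaves (h : IsBalancedEdge G r c c') :
    Disjoint (nearLeaves G r c) (nearLeaves G r c') := by
  refine Finset.disjoint_left.2 fun x hx hx' => ?_
  have := h.dist_of_mem_nearLeaves hx
  have := h.symm.dist_of_mem_nearLeaves hx'
  omega

lemma card_nearLeaves_add_card_nearLeaves (h : IsBalancedEdge G r c c') :
    (nearLeaves G r c).card + (nearLeaves G r c').card = (leavesFinset G).card := by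
  rw [← Finset.card_union_of_disjoint h.disjoint_nearLeaves]
  congr 1
  ext x
  rw [Finset.mem_union]
  exact ⟨fun hx => hx.elim (Finset.mem_of_mem_filter x) (Finset.mem_of_mem_filter x),
    h.mem_nearLeaves_or⟩

lemma dist_le_of_mem_nearLeaves (hG : G.IsTree) {x y : V} (hx : x ∈ nearLeaves G r c)
    (hy : y ∈ nearLeaves G r c) : G.dist x y ≤ 2 * r := by
  have hx := (Finset.mem_filter.1 hx).2
  have hy := (Finset.mem_filter.1 hy).2
  have := hG.connected.dist_triangle (u := x) (v := c) (w := y)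
  rw [dist_comm (u := c)] at this
  omega

lemma dist_eq_of_mem_nearLeaves (hG : G.IsTree) (h : IsBalancedEdge G r c c') {x y : V}
    (hx : x ∈ nearLeaves G r c) (hy : y ∈ nearLeaves G r c') : G.dist x y = 2 * r + 1 := by
  obtain ⟨hxc, hxc'⟩ := h.dist_of_mem_nearLeaves hx
  obtain ⟨hyc', hyc⟩ := h.symm.dist_of_mem_nearLeaves hy
  have := dist_eq_dist_add_one_add_dist hG h.1 (hxc'.trans (by rw [hxc]))
    (hyc.trans (by rw [hyc']))
  rw [dist_comm (u := c')] at this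
  omega

lemma steklovEig_two_le (hG : G.IsTree) (h : IsBalancedEdge G r c c') :
    steklovEig G (leavesFinset G) 2 ≤
      (r + 1 / (((nearLeaves G r c).card : ℝ)⁻¹ + ((nearLeaves G r c').card : ℝ)⁻¹))⁻¹ := by
  have hwithin : ∀ v, ∀ x ∈ nearLeaves G r v, ∀ y ∈ nearLeaves G r v, x ≠ y →
      (G.dist x y : ℝ) ≤ 2 * r := fun v x hx y hy _ => by
    exact_mod_cast dist_le_of_mem_nearLeaves hG hx hy
  have hmem := inv_mem_trialBounds_of_dist_le hG (Finset.filter_subset _ _)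
    (Finset.filter_subset _ _) (h.nearLeaves_nonempty hG) (h.symm.nearLeaves_nonempty hG)
    h.disjoint_nearLeaves (a := 2 * r) (D := 2 * r + 1) (by positivity) (by linarith)
    (hwithin c) (hwithin c') fun x hx y hy => by
      exact_mod_cast (h.dist_eq_of_mem_nearLeaves hG hx hy).ge
  rw [mul_div_cancel_left₀ _ two_ne_zero, add_sub_cancel_left] at hmem
  exact steklovEig_le_of_mem_trialBounds one_lt_two hmem

end IsBalancedEdge

lemma exists_isBalancedEdge (hG : G.IsTree) (hr : 1 ≤ r) (hb : 1 < (leavesFinset G).card)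
    (hV : (leavesFinset G).card * r + 2 ≤ Fintype.card V)
    (hdist : ∀ i ∈ leavesFinset G, ∀ j ∈ leavesFinset G, G.dist i j ≤ 2 * r + 1) :
    ∃ c c', IsBalancedEdge G r c c' := by
  obtain ⟨c, c', hcc', hleaf⟩ := exists_adj_forall_dist_le_of_forall_dist_le hG hb hdist
  exact ⟨c, c', isBalancedEdge_of_card_le hG hr hV hcc' hleaf⟩

end BalancedEdge

section AlmostFork

variable {b r : ℕ}

/-- The length of the arm `l` of the almost fork `AF(b, r)`: arm `0` is the long one. -/
def forkArmLength (r : ℕ) (l : Fin b) : ℕ := if (l : ℕ) = 0 then r + 1 else r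

/-- The vertex of the arm `l` of `almostFork b r` at distance `k` from the centre. It is meaningful
for `k ≤ forkArmLength r l`; beyond that the value is the end of the long arm. -/
def forkArm (r : ℕ) (l : Fin b) : ℕ → (Fin b × Fin r) ⊕ Bool
  | 0 => Sum.inr false
  | k + 1 => if h : k < r then Sum.inl (l, ⟨k, h⟩) else Sum.inr true

/-- The end of the arm `l` of `almostFork b r`. -/
def forkTip (r : ℕ) (l : Fin b) : (Fin b × Fin r) ⊕ Bool := forkArm r l (forkArmLength r l)

lemma le_forkArmLength (l : Fin b) : r ≤ forkArmLength r l := by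
  unfold forkArmLength; split_ifs <;> omega

lemma sum_forkArmLength (hb : 0 < b) : ∑ l : Fin b, forkArmLength r l = b * r + 1 := by
  obtain ⟨b, rfl⟩ := Nat.exists_eq_add_one.2 hb
  simp only [forkArmLength, Fin.sum_univ_succ, Fin.val_zero, if_true, Fin.val_succ,
    Nat.succ_ne_zero, if_false, Finset.sum_const, Finset.card_univ, Fintype.card_fin, smul_eq_mul]
  ring

lemma eq_zero_or_eq_of_forkArm_eq {l m : Fin b} {j k : ℕ} (hj : j ≤ forkArmLength r l)
    (hk : k ≤ forkArmLength r m) (h : forkArm r l j = forkArm r m k) :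
    j = k ∧ (j = 0 ∨ l = m) := by
  unfold forkArmLength at hj hk
  rcases j with _ | j <;> rcases k with _ | k <;> simp only [forkArm] at h
  · simp
  · split_ifs at h; simp at h
  · split_ifs at h; simp at h
  · split_ifs at h hj hk <;> simp [Fin.ext_iff] at h ⊢ <;> omega

lemma exists_forkArm_eq (hb : 0 < b) (v : (Fin b × Fin r) ⊕ Bool) :
    ∃ (l : Fin b) (k : ℕ), k ≤ forkArmLength r l ∧ forkArm r l k = v := by
  rcases v with ⟨l, i⟩ | (_ | _)
  · exact ⟨l, i + 1, i.2.trans_le (le_forkArmLength l), by simp [forkArm]⟩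
  · exact ⟨⟨0, hb⟩, 0, Nat.zero_le _, rfl⟩
  · exact ⟨⟨0, hb⟩, r + 1, by simp [forkArmLength], by simp [forkArm]⟩

lemma almostFork_adj_forkArm (hr : 1 ≤ r) {l : Fin b} {k : ℕ} (hk : k < forkArmLength r l) :
    (almostFork b r).Adj (forkArm r l k) (forkArm r l (k + 1)) := by
  unfold forkArmLength at hk
  rcases k with _ | k <;> simp only [forkArm, almostFork, fromRel_adj]
  · simp [Nat.lt_of_lt_of_le one_pos hr]
  · split_ifs at hk ⊢ <;> simp [Fin.ext_iff] <;> omega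

lemma exists_forkArm_of_almostFork_adj {x y : (Fin b × Fin r) ⊕ Bool}
    (h : (almostFork b r).Adj x y) : ∃ (l : Fin b) (k : ℕ), k < forkArmLength r l ∧
      (x = forkArm r l k ∧ y = forkArm r l (k + 1) ∨
        y = forkArm r l k ∧ x = forkArm r l (k + 1)) := by
  suffices hrel : ∀ x y : (Fin b × Fin r) ⊕ Bool, (match x, y with
      | Sum.inr false, Sum.inl (_, i) => (i : ℕ) = 0
      | Sum.inl (l, i), Sum.inl (m, j) => l = m ∧ (j : ℕ) = (i : ℕ) + 1
      | Sum.inl (l, i), Sum.inr true => (l : ℕ) = 0 ∧ (i : ℕ) = r - 1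
      | _, _ => False) → ∃ (l : Fin b) (k : ℕ), k < forkArmLength r l ∧
        x = forkArm r l k ∧ y = forkArm r l (k + 1) by
    rcases ((fromRel_adj _ _ _).1 h).2 with h | h
    · obtain ⟨l, k, hk, hxy⟩ := hrel x y h
      exact ⟨l, k, hk, Or.inl hxy⟩
    · obtain ⟨l, k, hk, hyx⟩ := hrel y x h
      exact ⟨l, k, hk, Or.inr hyx⟩
  rintro (⟨l, i⟩ | (_ | _)) (⟨m, j⟩ | (_ | _)) h <;> simp only at h
  · obtain ⟨rfl, hij⟩ := h
    exact ⟨l, i + 1, by have := le_forkArmLength (r := r) l; omega, by simp [forkArm],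
      by simp [forkArm, ← hij]⟩
  · obtain ⟨hl, hi⟩ := h
    exact ⟨l, r, by simp [forkArmLength, hl], by
      obtain ⟨r, rfl⟩ := Nat.exists_eq_add_one.2 i.pos
      simp [forkArm, Fin.ext_iff, hi], by simp [forkArm]⟩
  · exact ⟨m, 0, j.pos.trans_le (le_forkArmLength m), rfl, by simp [forkArm, ← h]⟩

/-- The edges of `almostFork b r` are parametrized by the pairs `(l, k)` with
`k < forkArmLength r l`. -/
def forkEdges (b r : ℕ) : Finset ((_ : Fin b) × ℕ) :=
  Finset.univ.sigma fun l => Finset.range (forkArmLength r l)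

lemma mem_forkEdges {p : (_ : Fin b) × ℕ} : p ∈ forkEdges b r ↔ p.2 < forkArmLength r p.1 := by
  simp [forkEdges]

lemma injOn_forkEdges :
    Set.InjOn (fun p : (_ : Fin b) × ℕ => s(forkArm r p.1 p.2, forkArm r p.1 (p.2 + 1)))
      (forkEdges b r) := by
  rintro ⟨l, j⟩ hj ⟨m, k⟩ hk h
  have hj : j < _ := mem_forkEdges.1 hj
  have hk : k < _ := mem_forkEdges.1 hk
  rcases Sym2.eq_iff.1 h with ⟨h, h'⟩ | ⟨h, h'⟩
  · obtain ⟨hjk, hlm⟩ := eq_zero_or_eq_of_forkArm_eq hj hk h'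
    obtain rfl : l = m := hlm.resolve_left (Nat.succ_ne_zero j)
    obtain rfl : j = k := Nat.succ.inj hjk
    rfl
  · have := (eq_zero_or_eq_of_forkArm_eq hj.le hk h).1
    have := (eq_zero_or_eq_of_forkArm_eq hj hk.le h').1
    omega

lemma almostFork_connected (hb : 0 < b) (hr : 1 ≤ r) : (almostFork b r).Connected := by
  refine connected_iff_exists_forall_reachable _ |>.2 ⟨Sum.inr false, fun v => ?_⟩
  obtain ⟨l, k, hk, rfl⟩ := exists_forkArm_eq hb v
  induction k with
  | zero => exact Reachable.refl _
  | succ k ih => exact (ih (Nat.le_of_succ_le hk)).trans (almostFork_adj_forkArm hr hk).reachable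

lemma almostFork_isTree (hb : 0 < b) (hr : 1 ≤ r) : (almostFork b r).IsTree := by
  have hconn := almostFork_connected hb hr
  refine isTree_iff_connected_and_card.2
    ⟨hconn, le_antisymm ?_ hconn.card_vert_le_card_edgeSet_add_one⟩
  have hsub : (almostFork b r).edgeSet ⊆ (fun p : (_ : Fin b) × ℕ =>
      s(forkArm r p.1 p.2, forkArm r p.1 (p.2 + 1))) '' forkEdges b r := by
    refine Sym2.ind fun x y h => ?_
    obtain ⟨l, k, hk, ⟨rfl, rfl⟩ | ⟨rfl, rfl⟩⟩ := exists_forkArm_of_almostFork_adj h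
    · exact ⟨⟨l, k⟩, mem_forkEdges.2 hk, rfl⟩
    · exact ⟨⟨l, k⟩, mem_forkEdges.2 hk, Sym2.eq_swap⟩
  calc Nat.card (almostFork b r).edgeSet + 1 ≤ (forkEdges b r).card + 1 := by
        gcongr
        refine (Set.ncard_le_ncard hsub ((forkEdges b r).finite_toSet.image _)).trans ?_
        exact (Set.ncard_image_le (forkEdges b r).finite_toSet).trans_eq (Set.ncard_coe_finset _)
    _ = Nat.card ((Fin b × Fin r) ⊕ Bool) := by
        simp [forkEdges, sum_forkArmLength hb]

lemma forkTip_injective (hr : 1 ≤ r) : Function.Injective (forkTip (b := b) r) := fun l m h => by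
  have := le_forkArmLength (r := r) l
  exact (eq_zero_or_eq_of_forkArm_eq le_rfl le_rfl h).2.resolve_left (by omega)

lemma forkTip_mem_leavesFinset (hr : 1 ≤ r) (l : Fin b) :
    forkTip r l ∈ leavesFinset (almostFork b r) := by
  obtain ⟨k, hk⟩ := Nat.exists_eq_add_one.2 (hr.trans (le_forkArmLength (r := r) l))
  refine mem_leavesFinset.2 ⟨forkArm r l k, ?_, fun y hy => ?_⟩
  · rw [forkTip, hk]
    exact (almostFork_adj_forkArm hr (by omega)).symm
  · obtain ⟨m, j, hj, ⟨htip, rfl⟩ | ⟨rfl, htip⟩⟩ := exists_forkArm_of_almostFork_adj hy <;>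
      obtain ⟨hkj, hlm⟩ := eq_zero_or_eq_of_forkArm_eq le_rfl (by omega) htip <;>
      obtain rfl := hlm.resolve_left (by omega)
    · omega
    · rw [show j = k by omega]

lemma leavesFinset_almostFork (hb : 2 ≤ b) (hr : 1 ≤ r) :
    leavesFinset (almostFork b r) = Finset.univ.image (forkTip r) := by
  ext v
  simp only [Finset.mem_image, Finset.mem_univ, true_and]
  refine ⟨fun hv => ?_, fun ⟨l, hl⟩ => hl ▸ forkTip_mem_leavesFinset hr l⟩
  obtain ⟨l, k, hk, rfl⟩ := exists_forkArm_eq (by omega) v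
  have hlen := fun l : Fin b => hr.trans (le_forkArmLength (r := r) l)
  rcases hk.eq_or_lt with rfl | hk
  · exact ⟨l, rfl⟩
  rcases k with _ | k
  · have hadj := fun l : Fin b => almostFork_adj_forkArm hr (hlen l)
    have heq := (mem_leavesFinset.1 hv).unique (hadj ⟨0, by omega⟩) (hadj ⟨1, by omega⟩)
    simpa using eq_zero_or_eq_of_forkArm_eq (hlen _) (hlen _) heq
  · have heq := (mem_leavesFinset.1 hv).unique
      (almostFork_adj_forkArm hr (Nat.lt_of_succ_lt hk)).symm (almostFork_adj_forkArm hr hk)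
    have := (eq_zero_or_eq_of_forkArm_eq (by omega) hk heq).1
    omega

lemma sum_leavesFinset_almostFork (hb : 2 ≤ b) (hr : 1 ≤ r) (g : (Fin b × Fin r) ⊕ Bool → ℝ) :
    ∑ x ∈ leavesFinset (almostFork b r), g x = ∑ l : Fin b, g (forkTip r l) := by
  rw [leavesFinset_almostFork hb hr, Finset.sum_image (forkTip_injective hr).injOn]

lemma card_leavesFinset_almostFork (hb : 2 ≤ b) (hr : 1 ≤ r) :
    (leavesFinset (almostFork b r)).card = b := by
  rw [leavesFinset_almostFork hb hr, Finset.card_image_of_injective _ (forkTip_injective hr),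
    Finset.card_univ, Fintype.card_fin]

end AlmostFork

section AlmostForkEnergy

lemma sum_sq_sub_le_dirichletEnergy {V ι : Type*} [Fintype V] {G : SimpleGraph V} {s : Finset ι}
    {x y : ι → V} (hadj : ∀ i ∈ s, G.Adj (x i) (y i))
    (hinj : Set.InjOn (fun i => s(x i, y i)) s) (f : V → ℝ) :
    ∑ i ∈ s, (f (x i) - f (y i)) ^ 2 ≤ dirichletEnergy G f := by
  set dart : ι ⊕ ι → V × V := Sum.elim (fun i => (x i, y i)) fun i => (y i, x i)
  have hdart : Set.InjOn dart (s.disjSum s) := by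
    rintro (i | i) hi (j | j) hj hij <;> simp only [SetLike.mem_coe, Finset.inl_mem_disjSum,
      Finset.inr_mem_disjSum] at hi hj <;> obtain ⟨h, h'⟩ := Prod.mk.inj hij
    · rw [hinj hi hj (Sym2.eq_iff.2 (Or.inl ⟨h, h'⟩))]
    · obtain rfl := hinj hi hj (Sym2.eq_iff.2 (Or.inr ⟨h, h'⟩))
      exact ((hadj i hi).ne h).elim
    · obtain rfl := hinj hi hj (Sym2.eq_iff.2 (Or.inr ⟨h', h⟩))
      exact ((hadj i hi).ne h').elim
    · rw [hinj hi hj (Sym2.eq_iff.2 (Or.inl ⟨h', h⟩))]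
  have hsub : (s.disjSum s).image dart ⊆ Finset.univ.filter fun p => G.Adj p.1 p.2 := by
    refine Finset.image_subset_iff.2 ?_
    rintro (i | i) hi <;> simp only [Finset.inl_mem_disjSum, Finset.inr_mem_disjSum] at hi
    · exact Finset.mem_filter.2 ⟨Finset.mem_univ _, hadj i hi⟩
    · exact Finset.mem_filter.2 ⟨Finset.mem_univ _, (hadj i hi).symm⟩
  rw [dirichletEnergy, le_div_iff₀ two_pos, ← Fintype.sum_prod_type', ← Finset.sum_filter]
  calc (∑ i ∈ s, (f (x i) - f (y i)) ^ 2) * 2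
      = ∑ p ∈ (s.disjSum s).image dart, (f p.1 - f p.2) ^ 2 := by
        rw [Finset.sum_image hdart, Finset.sum_disjSum, mul_two]
        simp only [dart, Sum.elim_inl, Sum.elim_inr, sub_sq_comm (f (y _))]
    _ ≤ _ := Finset.sum_le_sum_of_subset_of_nonneg hsub fun _ _ _ => sq_nonneg _

lemma sq_sub_div_le_sum_range (u : ℕ → ℝ) (m : ℕ) :
    (u m - u 0) ^ 2 / m ≤ ∑ k ∈ Finset.range m, (u k - u (k + 1)) ^ 2 := by
  have hcs := sq_sum_le_card_mul_sum_sq (s := Finset.range m) (f := fun k => u (k + 1) - u k)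
  rw [Finset.sum_range_sub, Finset.card_range] at hcs
  simp only [sub_sq_comm (u _) (u (_ + 1))]
  exact div_le_of_le_mul₀ m.cast_nonneg (Finset.sum_nonneg fun _ _ => sq_nonneg _)
    (by rwa [mul_comm])

variable {b r : ℕ}

lemma sum_sq_forkTip_sub_div_le_dirichletEnergy (hr : 1 ≤ r) (f : (Fin b × Fin r) ⊕ Bool → ℝ) :
    ∑ l : Fin b, (f (forkTip r l) - f (Sum.inr false)) ^ 2 / forkArmLength r l ≤
      dirichletEnergy (almostFork b r) f := by
  have hedges := sum_sq_sub_le_dirichletEnergy (x := fun p => forkArm r p.1 p.2)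
    (y := fun p => forkArm r p.1 (p.2 + 1))
    (fun _ hp => almostFork_adj_forkArm hr (mem_forkEdges.1 hp)) injOn_forkEdges f
  rw [forkEdges, Finset.sum_sigma] at hedges
  exact (Finset.sum_le_sum fun l _ =>
    sq_sub_div_le_sum_range (fun k => f (forkArm r l k)) (forkArmLength r l)).trans hedges

lemma div_mul_add_le_of_sq_le {N ρ P x c : ℝ} (hN : 0 < N) (hρ : 0 < ρ) (hP : x ^ 2 ≤ N * P) :
    (N + 1) / ((N + 1) * (ρ + 1) - 1) * (x ^ 2 + P) ≤
      (x - c) ^ 2 / (ρ + 1) + (P + 2 * c * x + N * c ^ 2) / ρ := by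
  rw [show (N + 1) * (ρ + 1) - 1 = N * (ρ + 1) + ρ by ring, ← sub_nonneg]
  have hdiff : (x - c) ^ 2 / (ρ + 1) + (P + 2 * c * x + N * c ^ 2) / ρ
        - (N + 1) / (N * (ρ + 1) + ρ) * (x ^ 2 + P)
      = (N * P - x ^ 2) / (ρ * (N * (ρ + 1) + ρ))
        + ((x + N * c) * (ρ + 1) - (x - c) * ρ) ^ 2 / (ρ * (ρ + 1) * (N * (ρ + 1) + ρ)) := by
    field_simp
    ring
  rw [hdiff]
  have := sub_nonneg.2 hP
  positivity

lemma mul_sum_sq_le_sum_sq_sub_div_forkArmLength (hb : 2 ≤ b) (hr : 1 ≤ r) {x : Fin b → ℝ}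
    (hx : ∑ l, x l = 0) (c : ℝ) :
    (b : ℝ) / (b * (r + 1) - 1) * ∑ l, x l ^ 2 ≤ ∑ l, (x l - c) ^ 2 / forkArmLength r l := by
  obtain ⟨N, rfl⟩ := Nat.exists_eq_add_one.2 (by omega : 0 < b)
  rw [Fin.sum_univ_succ] at hx
  have hshort : ∑ l : Fin N, x l.succ = -x 0 := by linarith
  have hcs := sq_sum_le_card_mul_sum_sq (s := Finset.univ) (f := fun l : Fin N => x l.succ)
  rw [hshort, neg_sq, Finset.card_univ, Fintype.card_fin] at hcs
  have hexpand : ∑ l : Fin N, (x l.succ - c) ^ 2 =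
      ∑ l : Fin N, x l.succ ^ 2 + 2 * c * x 0 + N * c ^ 2 := by
    simp only [sub_sq, Finset.sum_add_distrib, Finset.sum_sub_distrib, ← Finset.sum_mul,
      ← Finset.mul_sum, hshort, Finset.sum_const, Finset.card_univ, Fintype.card_fin, nsmul_eq_mul]
    ring
  simp only [Fin.sum_univ_succ, forkArmLength, Fin.val_zero, if_true, Fin.val_succ,
    Nat.succ_ne_zero, if_false, ← Finset.sum_div, hexpand, Nat.cast_add, Nat.cast_one]
  exact div_mul_add_le_of_sq_le (by norm_cast; omega) (by exact_mod_cast hr) hcs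

lemma mul_sum_sq_le_dirichletEnergy_almostFork (hb : 2 ≤ b) (hr : 1 ≤ r)
    {f : (Fin b × Fin r) ⊕ Bool → ℝ} (hf : ∑ x ∈ leavesFinset (almostFork b r), f x = 0) :
    (b : ℝ) / (b * (r + 1) - 1) * ∑ x ∈ leavesFinset (almostFork b r), f x ^ 2 ≤
      dirichletEnergy (almostFork b r) f := by
  rw [sum_leavesFinset_almostFork hb hr] at hf ⊢
  exact (mul_sum_sq_le_sum_sq_sub_div_forkArmLength hb hr hf _).trans
    (sum_sq_forkTip_sub_div_le_dirichletEnergy hr f)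

end AlmostForkEnergy

section Isomorphism

variable {V W : Type*} {G : SimpleGraph V} {H : SimpleGraph W}

lemma nonempty_iso_of_bijective_hom (hG : G.IsTree) (hH : H.Connected) (ψ : H →g G)
    (hψ : Function.Bijective ψ) : Nonempty (G ≃g H) := by
  set e : W ≃ V := Equiv.ofBijective ψ hψ
  have hle : H.map e.toEmbedding ≤ G := by
    intro x y h
    obtain ⟨u, v, huv, rfl, rfl⟩ := (map_adj _ _ _ _).1 h
    exact ψ.map_adj huv
  have hge : G ≤ H.map e.toEmbedding :=
    (isTree_iff_minimal_connected.1 hG).2 ((Iso.map e H).connected_iff.1 hH) hle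
  exact le_antisymm hle hge ▸ ⟨(Iso.map e H).symm⟩

lemma exists_almostFork_hom {b r : ℕ} (hb : 0 < b) {u : Fin b → ℕ → V} {c : V}
    (hc : ∀ l, u l 0 = c) (hadj : ∀ l k, k < forkArmLength r l → G.Adj (u l k) (u l (k + 1))) :
    ∃ ψ : almostFork b r →g G, ∀ l k, k ≤ forkArmLength r l → ψ (forkArm r l k) = u l k := by
  choose arm depth hdepth harm using exists_forkArm_eq (r := r) hb
  have heval : ∀ l k, k ≤ forkArmLength r l →
      u (arm (forkArm r l k)) (depth (forkArm r l k)) = u l k := by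
    intro l k hk
    obtain ⟨hdk, h0 | hl⟩ := eq_zero_or_eq_of_forkArm_eq (hdepth _) hk (harm (forkArm r l k))
    · rw [h0, hc, show k = 0 from hdk.symm.trans h0, hc]
    · rw [hdk, hl]
  refine ⟨⟨fun v => u (arm v) (depth v), fun {x y} hxy => ?_⟩, heval⟩
  obtain ⟨l, k, hk, ⟨rfl, rfl⟩ | ⟨rfl, rfl⟩⟩ := exists_forkArm_of_almostFork_adj hxy
  · rw [heval l k hk.le, heval l (k + 1) hk]
    exact hadj l k hk
  · rw [heval l k hk.le, heval l (k + 1) hk]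
    exact (hadj l k hk).symm

variable [Fintype V] [Fintype W]

lemma exists_equiv_leavesFinset_dist_eq_forkArmLength {b r : ℕ} {c x₀ : V}
    (hcard : (leavesFinset G).card = b) (hx₀ : x₀ ∈ leavesFinset G) (hdist₀ : G.dist c x₀ = r + 1)
    (hdist : ∀ x ∈ leavesFinset G, x ≠ x₀ → G.dist c x = r) :
    ∃ e : Fin b ≃ {x // x ∈ leavesFinset G}, ∀ l, G.dist c (e l) = forkArmLength r l := by
  have hb : 0 < b := hcard ▸ Finset.card_pos.2 ⟨x₀, hx₀⟩
  have e₀ : Fin b ≃ {x // x ∈ leavesFinset G} := Fintype.equivOfCardEq (by simp [hcard])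
  set e := e₀.trans (Equiv.swap (e₀ ⟨0, hb⟩) ⟨x₀, hx₀⟩)
  have he : e ⟨0, hb⟩ = ⟨x₀, hx₀⟩ := by simp [e]
  refine ⟨e, fun l => ?_⟩
  unfold forkArmLength
  split_ifs with hl
  · rw [show l = ⟨0, hb⟩ from Fin.ext hl, he]
    exact hdist₀
  · refine hdist _ (e l).2 fun h => hl ?_
    rw [e.injective (he ▸ Subtype.ext h : e l = e ⟨0, hb⟩)]

lemma nonempty_iso_almostFork_of_dist_eq {b r : ℕ} (hG : G.IsTree) (hr : 1 ≤ r)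
    (hcard : (leavesFinset G).card = b) (hV : b * r + 2 ≤ Fintype.card V) {c x₀ : V}
    (hx₀ : x₀ ∈ leavesFinset G) (hdist₀ : G.dist c x₀ = r + 1)
    (hdist : ∀ x ∈ leavesFinset G, x ≠ x₀ → G.dist c x = r) :
    Nonempty (G ≃g almostFork b r) := by
  have hb : 0 < b := hcard ▸ Finset.card_pos.2 ⟨x₀, hx₀⟩
  obtain ⟨e, he⟩ := exists_equiv_leavesFinset_dist_eq_forkArmLength hcard hx₀ hdist₀ hdist
  choose geo hgeo using hG.connected.exists_walk_length_eq_dist c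
  obtain ⟨ψ, hψ⟩ := exists_almostFork_hom (G := G) (r := r) hb
    (u := fun l => (geo (e l)).getVert) (c := c) (fun l => Walk.getVert_zero _)
    fun l k hk => (geo (e l)).adj_getVert_succ (by rwa [hgeo, he])
  have hsurj : Function.Surjective ψ := by
    intro v
    rcases eq_or_ne v c with rfl | hv
    · exact ⟨forkArm r ⟨0, hb⟩ 0, (hψ _ 0 (Nat.zero_le _)).trans (Walk.getVert_zero _)⟩
    obtain ⟨x, hx, hvx⟩ := exists_mem_leavesFinset_dist_add_dist hG hv
    obtain ⟨l, hl⟩ := e.surjective ⟨x, hx⟩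
    obtain rfl : (e l : V) = x := congrArg Subtype.val hl
    refine ⟨forkArm r l (G.dist c v), ?_⟩
    rw [hψ l _ (by rw [← he]; omega)]
    exact getVert_dist_eq_of_dist_add_dist hG _ (hgeo _) hvx
  have hcardV : Fintype.card ((Fin b × Fin r) ⊕ Bool) = Fintype.card V :=
    le_antisymm (by simpa using hV) (Fintype.card_le_of_surjective ψ hsurj)
  exact nonempty_iso_of_bijective_hom hG (almostFork_connected hb hr) ψ
    ((Fintype.bijective_iff_surjective_and_card _).2 ⟨hsurj, hcardV⟩)

lemma dirichletEnergy_comp_iso (φ : G ≃g H) (f : W → ℝ) :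
    dirichletEnergy G (f ∘ φ) = dirichletEnergy H f := by
  simp only [dirichletEnergy, ← φ.toEquiv.sum_comp, RelIso.coe_fn_toEquiv, φ.map_adj_iff,
    Function.comp_apply]

lemma map_leavesFinset (φ : G ≃g H) :
    (leavesFinset G).map φ.toEquiv.toEmbedding = leavesFinset H := by
  ext w
  obtain ⟨v, rfl⟩ := φ.surjective w
  refine (Finset.mem_map' φ.toEquiv.toEmbedding).trans ?_
  simp only [leavesFinset, Finset.mem_filter, Finset.mem_univ, true_and, φ.degree_eq]

lemma card_leavesFinset_eq_of_iso (φ : G ≃g H) :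
    (leavesFinset G).card = (leavesFinset H).card := by
  rw [← map_leavesFinset φ, Finset.card_map]

lemma sum_leavesFinset_comp_iso (φ : G ≃g H) (g : W → ℝ) :
    ∑ x ∈ leavesFinset G, g (φ x) = ∑ y ∈ leavesFinset H, g y := by
  rw [← map_leavesFinset φ, Finset.sum_map]
  rfl

end Isomorphism

section Extremal

variable {V : Type*} [Fintype V] {G : SimpleGraph V} {b r : ℕ} {c c' : V}

lemma inv_add_one_div_inv_add_inv {ρ s t : ℝ} (hs : 0 < s) (ht : 0 < t) :
    (ρ + 1 / (s⁻¹ + t⁻¹))⁻¹ = (s + t) / ((s + t) * ρ + s * t) := by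
  have := (add_pos hs ht).ne'
  field_simp
  rw [add_comm t]

namespace IsBalancedEdge

lemma steklovEig_two_le_div (hG : G.IsTree) (h : IsBalancedEdge G r c c')
    (hcard : (leavesFinset G).card = b) :
    steklovEig G (leavesFinset G) 2 ≤
      b / (b * r + (nearLeaves G r c).card * (nearLeaves G r c').card) := by
  have hle := h.steklovEig_two_le hG
  rwa [inv_add_one_div_inv_add_inv, ← Nat.cast_add, h.card_nearLeaves_add_card_nearLeaves,
    hcard] at hle
  · exact_mod_cast (h.nearLeaves_nonempty hG).card_pos
  · exact_mod_cast (h.symm.nearLeaves_nonempty hG).card_pos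

lemma steklovEig_two_le_of_card_eq (hG : G.IsTree) (h : IsBalancedEdge G r c c')
    (hcard : (leavesFinset G).card = b) :
    steklovEig G (leavesFinset G) 2 ≤ b / (b * (r + 1) - 1) := by
  have hsum := hcard ▸ h.card_nearLeaves_add_card_nearLeaves
  have hs : 1 ≤ ((nearLeaves G r c).card : ℝ) := by
    exact_mod_cast (h.nearLeaves_nonempty hG).card_pos
  have ht : 1 ≤ ((nearLeaves G r c').card : ℝ) := by
    exact_mod_cast (h.symm.nearLeaves_nonempty hG).card_pos
  have : (0 : ℝ) ≤ r := r.cast_nonneg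
  refine (h.steklovEig_two_le_div hG hcard).trans ?_
  rw [← hsum, Nat.cast_add]
  exact div_le_div_of_nonneg_left (by positivity) (by nlinarith) (by nlinarith)

lemma steklovEig_two_lt_of_card_eq (hG : G.IsTree) (h : IsBalancedEdge G r c c')
    (hcard : (leavesFinset G).card = b) (hs : 2 ≤ (nearLeaves G r c).card)
    (ht : 2 ≤ (nearLeaves G r c').card) :
    steklovEig G (leavesFinset G) 2 < b / (b * (r + 1) - 1) := by
  have hsum := hcard ▸ h.card_nearLeaves_add_card_nearLeaves
  have hs : (2 : ℝ) ≤ (nearLeaves G r c).card := by exact_mod_cast hs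
  have ht : (2 : ℝ) ≤ (nearLeaves G r c').card := by exact_mod_cast ht
  have : (0 : ℝ) ≤ r := r.cast_nonneg
  refine (h.steklovEig_two_le_div hG hcard).trans_lt ?_
  rw [← hsum, Nat.cast_add]
  exact div_lt_div_of_pos_left (by positivity) (by nlinarith) (by nlinarith)

lemma nonempty_iso_almostFork (hG : G.IsTree) (hr : 1 ≤ r) (h : IsBalancedEdge G r c c')
    (hcard : (leavesFinset G).card = b) (hV : b * r + 2 ≤ Fintype.card V)
    (hone : (nearLeaves G r c).card = 1) : Nonempty (G ≃g almostFork b r) := by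
  obtain ⟨x₀, hx₀⟩ := Finset.card_eq_one.1 hone
  have hmem : x₀ ∈ nearLeaves G r c := hx₀ ▸ Finset.mem_singleton_self x₀
  refine nonempty_iso_almostFork_of_dist_eq hG hr hcard hV (c := c')
    (Finset.mem_of_mem_filter x₀ hmem) (dist_comm.trans (h.dist_of_mem_nearLeaves hmem).2)
    fun x hx hne => dist_comm.trans ?_
  have hx' := (h.mem_nearLeaves_or hx).resolve_left fun hxc =>
    hne (Finset.mem_singleton.1 (hx₀ ▸ hxc))
  exact (h.symm.dist_of_mem_nearLeaves hx').1

end IsBalancedEdge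

lemma steklovEig_two_lt_of_le_dist (hG : G.IsTree) (hb : 2 ≤ b) {i j : V}
    (hi : i ∈ leavesFinset G) (hj : j ∈ leavesFinset G) (hij : 2 * r + 2 ≤ G.dist i j) :
    steklovEig G (leavesFinset G) 2 < b / (b * (r + 1) - 1) := by
  have hne : i ≠ j := by rintro rfl; simp at hij
  have hb : (2 : ℝ) ≤ b := by exact_mod_cast hb
  have hij : 2 * ((r : ℝ) + 1) ≤ G.dist i j := by rw [mul_add_one]; exact_mod_cast hij
  have : (0 : ℝ) ≤ r := r.cast_nonneg
  calc steklovEig G (leavesFinset G) 2 ≤ 2 / G.dist i j :=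
        steklovEig_le_of_mem_trialBounds one_lt_two (two_div_dist_mem_trialBounds hG hi hj hne)
    _ ≤ 2 / (2 * (r + 1)) := by gcongr
    _ < b / (b * (r + 1) - 1) := by
        rw [div_lt_div_iff₀ (by positivity) (by nlinarith)]
        linarith

lemma steklovEig_two_lt_or_le_and_nonempty_iso (hG : G.IsTree) (hb : 2 ≤ b) (hr : 1 ≤ r)
    (hcard : (leavesFinset G).card = b) (hV : b * r + 2 ≤ Fintype.card V) :
    steklovEig G (leavesFinset G) 2 < b / (b * (r + 1) - 1) ∨
      steklovEig G (leavesFinset G) 2 ≤ b / (b * (r + 1) - 1) ∧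
        Nonempty (G ≃g almostFork b r) := by
  by_cases hdist : ∀ i ∈ leavesFinset G, ∀ j ∈ leavesFinset G, G.dist i j ≤ 2 * r + 1
  · obtain ⟨c, c', h⟩ := exists_isBalancedEdge hG hr (by omega) (by rwa [hcard]) hdist
    have hle := h.steklovEig_two_le_of_card_eq hG hcard
    have hs := (h.nearLeaves_nonempty hG).card_pos
    have ht := (h.symm.nearLeaves_nonempty hG).card_pos
    rcases Nat.eq_or_lt_of_le hs with hs | hs
    · exact Or.inr ⟨hle, h.nonempty_iso_almostFork hG hr hcard hV hs.symm⟩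
    rcases Nat.eq_or_lt_of_le ht with ht | ht
    · exact Or.inr ⟨hle, h.symm.nonempty_iso_almostFork hG hr hcard hV ht.symm⟩
    · exact Or.inl (h.steklovEig_two_lt_of_card_eq hG hcard hs ht)
  · push Not at hdist
    obtain ⟨i, hi, j, hj, hij⟩ := hdist
    exact Or.inl (steklovEig_two_lt_of_le_dist hG hb hi hj hij)

lemma le_steklovEig_two_of_iso_almostFork (hb : 2 ≤ b) (hr : 1 ≤ r)
    (φ : G ≃g almostFork b r) :
    (b : ℝ) / (b * (r + 1) - 1) ≤ steklovEig G (leavesFinset G) 2 := by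
  have hG : G.IsTree := φ.isTree_iff.2 (almostFork_isTree (by omega) hr)
  have hcard : (leavesFinset G).card = b :=
    (card_leavesFinset_eq_of_iso φ).trans (card_leavesFinset_almostFork hb hr)
  obtain ⟨i, hi, j, hj, hij⟩ := Finset.one_lt_card.1 (by omega : 1 < (leavesFinset G).card)
  refine le_steklovEig one_lt_two ⟨_, two_div_dist_mem_trialBounds hG hi hj hij⟩ fun f hf => ?_
  obtain ⟨g, rfl⟩ : ∃ g, g ∘ φ = f := ⟨f ∘ φ.symm, by ext x; simp⟩
  simp only [Function.comp_apply] at hf ⊢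
  rw [sum_leavesFinset_comp_iso φ g] at hf
  rw [sum_leavesFinset_comp_iso φ fun y => g y ^ 2, dirichletEnergy_comp_iso]
  exact mul_sum_sq_le_dirichletEnergy_almostFork hb hr hf

lemma steklovEig_two_le_and_eq_iff (hG : G.IsTree) (hb : 2 ≤ b) (hr : 1 ≤ r)
    (hcard : (leavesFinset G).card = b) (hV : b * r + 2 ≤ Fintype.card V) :
    steklovEig G (leavesFinset G) 2 ≤ b / (b * (r + 1) - 1) ∧
      (steklovEig G (leavesFinset G) 2 = b / (b * (r + 1) - 1) ↔
        Nonempty (G ≃g almostFork b r)) := by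
  rcases steklovEig_two_lt_or_le_and_nonempty_iso hG hb hr hcard hV with hlt | ⟨hle, hiso⟩
  · exact ⟨hlt.le, fun heq => (hlt.ne heq).elim,
      fun ⟨φ⟩ => ((le_steklovEig_two_of_iso_almostFork hb hr φ).not_gt hlt).elim⟩
  · exact ⟨hle, fun _ => hiso,
      fun ⟨φ⟩ => hle.antisymm (le_steklovEig_two_of_iso_almostFork hb hr φ)⟩

lemma sigmaMax_two (hb : 2 ≤ b) (hr : 1 ≤ r) :
    sigmaMax 2 b (b * r + 2) = b / (b * (r + 1) - 1) := by
  refine IsGreatest.csSup_eq ⟨?_, ?_⟩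
  · let e : (Fin b × Fin r) ⊕ Bool ≃ Fin (b * r + 2) := Fintype.equivOfCardEq (by simp)
    let φ := Iso.map e (almostFork b r)
    have hG := φ.isTree_iff.1 (almostFork_isTree (by omega) hr)
    have hcard := (card_leavesFinset_eq_of_iso φ).symm.trans (card_leavesFinset_almostFork hb hr)
    exact ⟨_, hG, hcard,
      ((steklovEig_two_le_and_eq_iff hG hb hr hcard (by simp)).2.2 ⟨φ.symm⟩).symm⟩
  · rintro s ⟨G, hG, hcard, rfl⟩
    exact (steklovEig_two_le_and_eq_iff hG hb hr hcard (by simp)).1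

end Extremal

end Steklov

theorem stmt2_general (b r : ℕ) (hb : 2 ≤ b) (hr : 1 ≤ r) :
    sigmaMax 2 b (b * r + 2) = (b : ℝ) / ((b : ℝ) * ((r : ℝ) + 1) - 1) ∧
    sigmaMax 2 b (b * r + 2) = 1 / ((r : ℝ) + 1 - 1 / (b : ℝ)) ∧
    ∀ (V : Type*) [Fintype V] (G : SimpleGraph V), G.IsTree → (leavesFinset G).card = b →
      b * r + 2 ≤ Fintype.card V →
      steklovEig G (leavesFinset G) 2 ≤ sigmaMax 2 b (b * r + 2) ∧
      (steklovEig G (leavesFinset G) 2 = sigmaMax 2 b (b * r + 2) ↔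
        Nonempty (G ≃g almostFork b r)) := by
  have hmax := Steklov.sigmaMax_two hb hr
  refine ⟨hmax, hmax.trans ?_, fun V _ G hG hcard hV => ?_⟩
  · have : (b : ℝ) ≠ 0 := by positivity
    field_simp
  · rw [hmax]
    exact Steklov.steklovEig_two_le_and_eq_iff hG hb hr hcard hV

/-- Let `b ≥ 3` and `r ≥ 1` be integers and set `n = b*r + 2`. Then
`σ_{2,max}(b,n) = b/(b(r+1)-1) = 1/(r + 1 - 1/b)`, and the unique tree (up to isomorphism)
with `b` leaves and `n` vertices attaining this maximum is the almost fork graph `AF(b,r)`. -/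
theorem stmt2 (b r : ℕ) (hb : 3 ≤ b) (hr : 1 ≤ r) (n : ℕ) (hn : n = b * r + 2) :
    sigmaMax 2 b n = (b : ℝ) / ((b : ℝ) * ((r : ℝ) + 1) - 1) ∧
    sigmaMax 2 b n = 1 / ((r : ℝ) + 1 - 1 / (b : ℝ)) ∧
    ∀ G : SimpleGraph (Fin n), G.IsTree → (leavesFinset G).card = b →
      (steklovEig G (leavesFinset G) 2 = sigmaMax 2 b n ↔
        Nonempty (G ≃g almostFork b r)) := by
  subst hn
  obtain ⟨hmax, hmax', huniq⟩ := stmt2_general b r (by omega) hr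
  exact ⟨hmax, hmax', fun G hG hcard => (huniq _ G hG hcard (by simp)).2⟩
end
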